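/- A splash can only occur through the second fluid (Lemma 2.4): For every δ > 0 there exists ε₃ > 0, depending only on A, T, δ, σ, g, ρ¹, ρ², with the following property: if t ∈ [0,T], α, β ∈ ℝ satisfy |α − β| ≥ δ, and the closed line segment joining z(α,t) and z(β,t) is contained in the closure of Ω¹(t), then |z(α,t) − z(β,t)| ≥ ε₃. -/

import Mathlib

noncomputable section
open Set MeasureTheory Filter

/-- The plane `ℝ²` with the Euclidean norm. -/
abbrev E2 : Type := EuclideanSpace ℝ (Fin 2)

/-- The real inner product on `ℝ²`. -/
def rinner (x y : E2) : ℝ := inner ℝ x y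

/-- The vector `(1,0)`. -/
def xvec : E2 := (EuclideanSpace.equiv (Fin 2) ℝ).symm ![1, 0]

/-- The vector `(0,1)`. -/
def e2vec : E2 := (EuclideanSpace.equiv (Fin 2) ℝ).symm ![0, 1]

/-- The period vector `(2π, 0)`. -/
def transl : E2 := (EuclideanSpace.equiv (Fin 2) ℝ).symm ![2 * Real.pi, 0]

/-- The rotation of a vector by `π/2`: `(x,y)^⊥ = (-y,x)`. -/
def perpv (w : E2) : E2 := (EuclideanSpace.equiv (Fin 2) ℝ).symm ![-(w 1), w 0]

/-- The chord-arc function `F(z)` of a time-dependent curve. -/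
def chordArcT (z : ℝ → ℝ → E2) (α β t : ℝ) : ℝ :=
  if α = β then ‖deriv (fun a => z a t) α‖ else ‖z α t - z β t‖ / |α - β|

/-- The two-fluid interface system on the time interval `[0,T]`, in the `2π`-periodic setting,
with densities `ρ1, ρ2`, surface tension coefficient `σ`, gravity constant `grav`, and
quantitative bounds measured by the constant `A`. -/
structure TwoFluid (ρ1 ρ2 σ grav T A : ℝ) where
  /-- the parametrization of the interface -/
  z : ℝ → ℝ → E2
  /-- the domain of the first fluid -/
  Ω1 : ℝ → Set E2
  /-- the domain of the second fluid -/
  Ω2 : ℝ → Set E2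
  /-- the velocity field of the first fluid -/
  u1 : E2 → ℝ → E2
  /-- the velocity field of the second fluid -/
  u2 : E2 → ℝ → E2
  /-- the pressure of the first fluid -/
  P1 : E2 → ℝ → ℝ
  /-- the pressure of the second fluid -/
  P2 : E2 → ℝ → ℝ
  hΩ1_open : ∀ t ∈ Icc (0:ℝ) T, IsOpen (Ω1 t)
  hΩ2_open : ∀ t ∈ Icc (0:ℝ) T, IsOpen (Ω2 t)
  hΩ1_conn : ∀ t ∈ Icc (0:ℝ) T, IsConnected (Ω1 t)
  hΩ2_conn : ∀ t ∈ Icc (0:ℝ) T, IsConnected (Ω2 t)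
  hΩ1_sc : ∀ t ∈ Icc (0:ℝ) T, SimplyConnectedSpace (Ω1 t)
  hΩ2_sc : ∀ t ∈ Icc (0:ℝ) T, SimplyConnectedSpace (Ω2 t)
  /-- `ℝ²` is the disjoint union of `Ω1 t`, `Ω2 t` and the interface `Γ_t` -/
  hUnion : ∀ t ∈ Icc (0:ℝ) T, Ω1 t ∪ Ω2 t ∪ range (fun α => z α t) = univ
  hDisj12 : ∀ t ∈ Icc (0:ℝ) T, Disjoint (Ω1 t) (Ω2 t)
  hDisj1Γ : ∀ t ∈ Icc (0:ℝ) T, Disjoint (Ω1 t) (range (fun α => z α t))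
  hDisj2Γ : ∀ t ∈ Icc (0:ℝ) T, Disjoint (Ω2 t) (range (fun α => z α t))
  hFront1 : ∀ t ∈ Icc (0:ℝ) T, frontier (Ω1 t) = range (fun α => z α t)
  hFront2 : ∀ t ∈ Icc (0:ℝ) T, frontier (Ω2 t) = range (fun α => z α t)
  /-- `Ω1` contains a lower half-plane and `Ω2` an upper half-plane -/
  hStrip : ∃ a : ℝ, 1 ≤ a ∧ ∀ t ∈ Icc (0:ℝ) T,
      {x : E2 | x 1 ≤ -a} ⊆ Ω1 t ∧ {x : E2 | a ≤ x 1} ⊆ Ω2 t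
  /-- `u1(·,t)` is `C³` on the closure of `Ω1 t` -/
  hu1_reg : ∀ t ∈ Icc (0:ℝ) T, ContDiffOn ℝ 3 (fun x => u1 x t) (closure (Ω1 t))
  hu2_reg : ∀ t ∈ Icc (0:ℝ) T, ContDiffOn ℝ 3 (fun x => u2 x t) (closure (Ω2 t))
  hP1_reg : ∀ t ∈ Icc (0:ℝ) T, ContDiffOn ℝ 1 (fun x => P1 x t) (closure (Ω1 t))
  hP2_reg : ∀ t ∈ Icc (0:ℝ) T, ContDiffOn ℝ 1 (fun x => P2 x t) (closure (Ω2 t))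
  /-- Euler's equation in `Ω1 t` -/
  hEuler1 : ∀ t ∈ Icc (0:ℝ) T, ∀ x ∈ Ω1 t,
      ρ1 • (deriv (fun s => u1 x s) t + fderiv ℝ (fun y => u1 y t) x (u1 x t)) =
        -gradient (fun y => P1 y t) x - (grav * ρ1) • e2vec
  /-- Euler's equation in `Ω2 t` -/
  hEuler2 : ∀ t ∈ Icc (0:ℝ) T, ∀ x ∈ Ω2 t,
      ρ2 • (deriv (fun s => u2 x s) t + fderiv ℝ (fun y => u2 y t) x (u2 x t)) =
        -gradient (fun y => P2 y t) x - (grav * ρ2) • e2vec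
  /-- incompressibility of the first fluid -/
  hdiv1 : ∀ t ∈ Icc (0:ℝ) T, ∀ x ∈ Ω1 t,
      fderiv ℝ (fun y => u1 y t) x (EuclideanSpace.single 0 1) 0 +
        fderiv ℝ (fun y => u1 y t) x (EuclideanSpace.single 1 1) 1 = 0
  hdiv2 : ∀ t ∈ Icc (0:ℝ) T, ∀ x ∈ Ω2 t,
      fderiv ℝ (fun y => u2 y t) x (EuclideanSpace.single 0 1) 0 +
        fderiv ℝ (fun y => u2 y t) x (EuclideanSpace.single 1 1) 1 = 0
  /-- irrotationality of the first fluid -/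
  hcurl1 : ∀ t ∈ Icc (0:ℝ) T, ∀ x ∈ Ω1 t,
      fderiv ℝ (fun y => u1 y t) x (EuclideanSpace.single 0 1) 1 -
        fderiv ℝ (fun y => u1 y t) x (EuclideanSpace.single 1 1) 0 = 0
  hcurl2 : ∀ t ∈ Icc (0:ℝ) T, ∀ x ∈ Ω2 t,
      fderiv ℝ (fun y => u2 y t) x (EuclideanSpace.single 0 1) 1 -
        fderiv ℝ (fun y => u2 y t) x (EuclideanSpace.single 1 1) 0 = 0
  /-- kinematic boundary condition for the first fluid -/
  hkin1 : ∀ t ∈ Icc (0:ℝ) T, ∀ α : ℝ,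
      rinner (deriv (fun s => z α s) t - u1 (z α t) t) (perpv (deriv (fun a => z a t) α)) = 0
  hkin2 : ∀ t ∈ Icc (0:ℝ) T, ∀ α : ℝ,
      rinner (deriv (fun s => z α s) t - u2 (z α t) t) (perpv (deriv (fun a => z a t) α)) = 0
  /-- the pressure jump at the interface is given by the surface tension times the curvature -/
  hjump : ∀ t ∈ Icc (0:ℝ) T, ∀ α : ℝ,
      P2 (z α t) t - P1 (z α t) t =
        -σ * (deriv (fun a => z a t) α 0 * deriv (fun a => deriv (fun b => z b t) a) α 1 -
              deriv (fun a => z a t) α 1 * deriv (fun a => deriv (fun b => z b t) a) α 0) /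
          ((deriv (fun a => z a t) α 0) ^ 2 + (deriv (fun a => z a t) α 1) ^ 2) ^ ((3:ℝ)/2)
  /-- `2π`-periodicity -/
  hper_z : ∀ t ∈ Icc (0:ℝ) T, ∀ α : ℝ, z (α + 2 * Real.pi) t = z α t + transl
  hper_Ω1 : ∀ t ∈ Icc (0:ℝ) T, (fun x => x + transl) '' Ω1 t = Ω1 t
  hper_Ω2 : ∀ t ∈ Icc (0:ℝ) T, (fun x => x + transl) '' Ω2 t = Ω2 t
  hper_u1 : ∀ t ∈ Icc (0:ℝ) T, ∀ x ∈ Ω1 t, u1 (x + transl) t = u1 x t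
  hper_u2 : ∀ t ∈ Icc (0:ℝ) T, ∀ x ∈ Ω2 t, u2 (x + transl) t = u2 x t
  /-- finite kinetic energy in a period -/
  hL2_1 : ∀ t ∈ Icc (0:ℝ) T,
      IntegrableOn (fun x => ‖u1 x t‖ ^ 2) (Ω1 t ∩ {x : E2 | x 0 ∈ Icc 0 (2 * Real.pi)})
  hL2_2 : ∀ t ∈ Icc (0:ℝ) T,
      IntegrableOn (fun x => ‖u2 x t‖ ^ 2) (Ω2 t ∩ {x : E2 | x 0 ∈ Icc 0 (2 * Real.pi)})
  /-- `z(α,t) - (α,0)` is `C⁴` with all derivatives of order `≤ 4` bounded by `A` -/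
  hz_smooth : ContDiffOn ℝ 4 (fun p : ℝ × ℝ => z p.1 p.2 - p.1 • xvec) (univ ×ˢ Icc (0:ℝ) T)
  hz_bound : ∀ p ∈ (univ ×ˢ Icc (0:ℝ) T : Set (ℝ × ℝ)), ∀ i : ℕ, i ≤ 4 →
      ‖iteratedFDerivWithin ℝ i (fun p : ℝ × ℝ => z p.1 p.2 - p.1 • xvec)
          (univ ×ˢ Icc (0:ℝ) T) p‖ ≤ A
  /-- the parametrization is regular -/
  hz_lower : ∀ t ∈ Icc (0:ℝ) T, ∀ α : ℝ, A⁻¹ ≤ ‖deriv (fun a => z a t) α‖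
  /-- `v¹(α,t) = u¹(z(α,t),t)` is `C³` with all derivatives of order `≤ 3` bounded by `A` -/
  hv1_smooth : ContDiffOn ℝ 3 (fun p : ℝ × ℝ => u1 (z p.1 p.2) p.2) (univ ×ˢ Icc (0:ℝ) T)
  hv1_bound : ∀ p ∈ (univ ×ˢ Icc (0:ℝ) T : Set (ℝ × ℝ)), ∀ i : ℕ, i ≤ 3 →
      ‖iteratedFDerivWithin ℝ i (fun p : ℝ × ℝ => u1 (z p.1 p.2) p.2)
          (univ ×ˢ Icc (0:ℝ) T) p‖ ≤ A
  /-- the chord-arc condition at time `0` -/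
  hchord0 : ∀ α β : ℝ, A⁻¹ ≤ chordArcT z α β 0
  /-- `u²` is bounded by `A` on the interface at time `0` -/
  hu2_init : ∀ α : ℝ, ‖u2 (z α 0) 0‖ ≤ A



lemma area_mean (f : ℂ → ℂ) (c : ℂ) (hd : DiffContOnCl ℂ f (Metric.ball c 1)) :
    ∫ w in Metric.closedBall (0:ℂ) 1, f (c + w) = Real.pi * f c := by
  have hcont : ContinuousOn f (Metric.closedBall c 1) := by
    have := hd.continuousOn
    rwa [closure_ball _ one_ne_zero] at this
  rw [← integral_indicator Metric.isClosed_closedBall.measurableSet,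
    ← Complex.integral_comp_polarCoord_symm]
  have hset : polarCoord.target = Ioi (0:ℝ) ×ˢ Ioo (-Real.pi) Real.pi := rfl
  have h1 : ∀ p ∈ polarCoord.target, p.1 • (Metric.closedBall (0:ℂ) 1).indicator
      (fun w => f (c + w)) (Complex.polarCoord.symm p) =
      (Ioc (0:ℝ) 1 ×ˢ Ioo (-Real.pi) Real.pi).indicator
        (fun p : ℝ × ℝ => p.1 • f (circleMap c p.1 p.2)) p := by
    intro p hp
    have hp' : 0 < p.1 ∧ p.2 ∈ Ioo (-Real.pi) Real.pi := by rw [hset] at hp; exact hp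
    have hn := Complex.norm_polarCoord_symm p
    rw [abs_of_pos hp'.1] at hn
    have he : c + Complex.polarCoord.symm p = circleMap c p.1 p.2 := by
      rw [Complex.polarCoord_symm_apply, circleMap, Complex.exp_mul_I, Complex.ofReal_cos,
        Complex.ofReal_sin]
    by_cases h : p.1 ≤ 1
    · rw [indicator_of_mem, indicator_of_mem, he]
      · exact ⟨⟨hp'.1, h⟩, hp'.2⟩
      · simpa [abs_of_pos hp'.1] using h
    · rw [indicator_of_notMem, indicator_of_notMem, smul_zero]
      · intro h'; exact h h'.1.2
      · simpa [abs_of_pos hp'.1] using h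
  rw [setIntegral_congr_fun polarCoord.open_target.measurableSet h1,
    setIntegral_indicator (measurableSet_Ioc.prod measurableSet_Ioo)]
  have h2 : polarCoord.target ∩ Ioc (0:ℝ) 1 ×ˢ Ioo (-Real.pi) Real.pi =
      Ioc (0:ℝ) 1 ×ˢ Ioo (-Real.pi) Real.pi := by
    rw [hset]
    apply inter_eq_right.2
    exact prod_mono (fun x hx => hx.1) le_rfl
  rw [h2, Measure.volume_eq_prod, setIntegral_prod]
  · have h3 : ∀ r ∈ Ioc (0:ℝ) 1, ∫ θ in Ioo (-Real.pi) Real.pi, r • f (circleMap c r θ) =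
        (r * (2 * Real.pi)) • f c := by
      intro r hr
      rw [integral_smul, ← integral_Ioc_eq_integral_Ioo,
        ← intervalIntegral.integral_of_le (by linarith [Real.pi_pos])]
      have hca : Real.circleAverage f c r = f c := by
        apply DiffContOnCl.circleAverage
        apply hd.mono
        rw [abs_of_pos hr.1]
        exact Metric.ball_subset_ball hr.2
      rw [Real.circleAverage_eq_integral_add (-Real.pi),
        intervalIntegral.integral_comp_add_right (fun θ => f (circleMap c r θ))] at hca
      have : (0 + -Real.pi) = -Real.pi := by ring
      rw [this] at hca
      have : (2 * Real.pi + -Real.pi) = Real.pi := by ring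
      rw [this] at hca
      rw [mul_smul]
      congr 1
      rw [← hca, smul_smul, mul_inv_cancel₀ (by positivity), one_smul]
    rw [setIntegral_congr_fun measurableSet_Ioc h3, ← intervalIntegral.integral_of_le zero_le_one,
      intervalIntegral.integral_smul_const, intervalIntegral.integral_mul_const, integral_id]
    simp
  · have hcomp : IsCompact (Icc (0:ℝ) 1 ×ˢ Icc (-Real.pi) Real.pi) := isCompact_Icc.prod isCompact_Icc
    have : ContinuousOn (fun p : ℝ × ℝ => p.1 • f (circleMap c p.1 p.2))
        (Icc (0:ℝ) 1 ×ˢ Icc (-Real.pi) Real.pi) := by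
      apply ContinuousOn.smul continuousOn_fst
      apply hcont.comp
      · apply Continuous.continuousOn
        unfold circleMap
        fun_prop
      · intro p hp
        simp only [Metric.mem_closedBall, dist_eq_norm, circleMap_sub_center, norm_circleMap_zero]
        rw [abs_of_nonneg hp.1.1]; exact hp.1.2
    have h4 := this.integrableOn_compact (μ := volume) hcomp
    rw [← Measure.volume_eq_prod]
    exact h4.mono_set (prod_mono Ioc_subset_Icc_self Ioo_subset_Icc_self)

lemma mean_bound (f : ℂ → ℂ) (c : ℂ) (hd : DiffContOnCl ℂ f (Metric.ball c 1)) (S : Set ℂ)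
    (hS : Metric.closedBall c 1 ⊆ S) (hi : IntegrableOn (fun w => ‖f w‖ ^ 2) S) :
    ‖f c‖ ≤ 1 + ∫ w in S, ‖f w‖ ^ 2 := by
  have hcont : ContinuousOn f (Metric.closedBall c 1) := by
    have := hd.continuousOn
    rwa [closure_ball _ one_ne_zero] at this
  have hpre : (fun w => c + w) ⁻¹' (Metric.closedBall c 1) = Metric.closedBall (0:ℂ) 1 := by
    ext w; simp
  have htr : ∫ w in Metric.closedBall (0:ℂ) 1, f (c + w) = ∫ w in Metric.closedBall c 1, f w := by
    rw [← hpre]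
    exact (measurePreserving_add_left volume c).setIntegral_preimage_emb
      (MeasurableEquiv.addLeft c).measurableEmbedding _ _
  have h := area_mean f c hd
  rw [htr] at h
  have hi2 := hi.mono_set hS
  have hvol : volume.real (Metric.closedBall c 1) = Real.pi := by
    simp [Measure.real, Complex.volume_closedBall]
  have hfin : volume (Metric.closedBall c 1) ≠ ⊤ := by
    simp [Complex.volume_closedBall]
  have hc1 : IntegrableOn (fun _ : ℂ => (1:ℝ)) (Metric.closedBall c 1) := by
    apply integrableOn_const hfin
  have h1 : ‖∫ w in Metric.closedBall c 1, f w‖ ≤ ∫ w in Metric.closedBall c 1, (1 + ‖f w‖^2) := by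
    refine (norm_integral_le_integral_norm _).trans ?_
    apply integral_mono
    · exact (hcont.integrableOn_compact (isCompact_closedBall _ _)).norm
    · exact hc1.add hi2
    · intro w
      simp only
      nlinarith [sq_nonneg (‖f w‖ - 1), norm_nonneg (f w)]
  rw [integral_add hc1 hi2, h, norm_mul, Complex.norm_real, Real.norm_of_nonneg Real.pi_pos.le] at h1
  simp only [integral_const, measureReal_restrict_apply_univ, hvol, smul_eq_mul, mul_one] at h1
  have h2 : ∫ w in Metric.closedBall c 1, ‖f w‖^2 ≤ ∫ w in S, ‖f w‖^2 :=
    setIntegral_mono_set hi (Eventually.of_forall fun _ => by positivity) hS.eventuallyLE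
  have h3 : 0 ≤ ∫ w in S, ‖f w‖^2 := integral_nonneg fun _ => by positivity
  have hpi := Real.pi_gt_three
  by_contra hcon
  push Not at hcon
  nlinarith


/-- Periodic maximum principle. -/
lemma periodic_max (U : Set ℂ) (hUo : IsOpen U) (hUc : IsPreconnected U) (a : ℝ)
    (hlow : ∀ w : ℂ, w.im ≤ -a → w ∈ U) (hup : ∀ w ∈ closure U, w.im ≤ a)
    (hper : ∀ w, w ∈ U ↔ w + 2 * Real.pi ∈ U)
    (f g : ℂ → ℂ) (hf : DifferentiableOn ℂ f U) (hfper : ∀ w ∈ U, f (w + 2 * Real.pi) = f w)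
    (hL2 : IntegrableOn (fun w => ‖f w‖ ^ 2) (U ∩ {w | w.re ∈ Icc 0 (2 * Real.pi)}))
    (hg : ContinuousOn g (closure U)) (hgf : EqOn g (deriv f) U)
    (hfr : (frontier U).Nonempty) (B : ℝ) (hB : ∀ w ∈ frontier U, ‖g w‖ ≤ B) :
    ∀ w ∈ closure U, ‖g w‖ ≤ B := by
  have hpi := Real.pi_gt_three
  -- periodicity for all integers
  have hperZ : ∀ (n : ℤ) (w : ℂ), w ∈ U ↔ w + n * (2 * Real.pi) ∈ U := by
    intro n
    induction n using Int.induction_on with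
    | zero => intro w; simp
    | succ k ih =>
      intro w
      rw [ih w, hper]
      push_cast; ring_nf
    | pred k ih =>
      intro w
      rw [ih w, hper (w + ((-k-1:ℤ):ℂ) * (2 * Real.pi))]
      push_cast; ring_nf
  have hfperZ : ∀ (n : ℤ) (w : ℂ), w ∈ U → f (w + n * (2 * Real.pi)) = f w := by
    intro n
    induction n using Int.induction_on with
    | zero => intro w; simp
    | succ k ih =>
      intro w hw
      rw [← ih w hw, ← hfper (w + (k:ℤ) * (2 * Real.pi)) ((hperZ k _).1 hw)]
      push_cast; ring_nf
    | pred k ih =>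
      intro w hw
      rw [← ih w hw, ← hfper _ ((hperZ (-k-1) _).1 hw)]
      push_cast; ring_nf
  have hclper : ∀ (n : ℤ) (w : ℂ), w ∈ closure U → w + n * (2 * Real.pi) ∈ closure U := by
    intro n w hw
    have hc : Continuous (fun w : ℂ => w + n * (2 * Real.pi)) := by fun_prop
    exact map_mem_closure (f := fun w : ℂ => w + n * (2 * Real.pi)) hc hw (fun v hv => (hperZ n v).1 hv)
  have hgper : ∀ (n : ℤ) (w : ℂ), w ∈ closure U → g (w + n * (2 * Real.pi)) = g w := by
    intro n
    have hEq : EqOn (fun w => g (w + n * (2 * Real.pi))) g U := by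
      intro w hw
      simp only
      rw [hgf ((hperZ n w).1 hw), hgf hw, ← deriv_comp_add_const]
      apply Filter.EventuallyEq.deriv_eq
      filter_upwards [hUo.mem_nhds hw] with v hv
      exact hfperZ n v hv
    have hc : Continuous (fun w : ℂ => w + n * (2 * Real.pi)) := by fun_prop
    exact hEq.of_subset_closure (hg.comp hc.continuousOn (fun w hw => hclper n w hw)) hg
      subset_closure le_rfl
  have hshift : ∀ (c : ℝ) (w : ℂ), ∃ n : ℤ, (w + n * (2 * Real.pi)).re ∈ Ico c (c + 2 * Real.pi) ∧
      (w + n * (2 * Real.pi)).im = w.im := by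
    intro c w
    obtain ⟨n, hn, -⟩ := existsUnique_add_zsmul_mem_Ico (Real.two_pi_pos) w.re c
    refine ⟨n, ?_, ?_⟩
    · simpa using hn
    · simp
  -- integrability on a double strip
  set S : Set ℂ := U ∩ {w | w.re ∈ Icc (-(2 * Real.pi)) (2 * Real.pi)} with hS
  have hL2S : IntegrableOn (fun w => ‖f w‖ ^ 2) S := by
    have hL2' : IntegrableOn (fun w => ‖f w‖ ^ 2) (U ∩ {w | w.re ∈ Icc (-(2 * Real.pi)) 0}) := by
      have hmp := measurePreserving_add_right (volume : Measure ℂ) (2 * Real.pi : ℂ)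
      have := (hmp.integrableOn_comp_preimage (MeasurableEquiv.addRight (2 * Real.pi : ℂ)).measurableEmbedding).2 hL2
      have hpre : (fun w : ℂ => w + 2 * Real.pi) ⁻¹' (U ∩ {w | w.re ∈ Icc 0 (2 * Real.pi)}) =
          U ∩ {w | w.re ∈ Icc (-(2 * Real.pi)) 0} := by
        ext w
        simp only [mem_preimage, mem_inter_iff, mem_ofPred_eq, ← hper w]
        simp [neg_le_iff_add_nonneg]
      rw [hpre] at this
      refine this.congr_fun ?_ ?_
      · intro w hw
        simp only [Function.comp]
        rw [hfper w hw.1]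
      · exact hUo.measurableSet.inter (measurableSet_Icc.preimage Complex.measurable_re)
    have := hL2'.union hL2
    apply this.mono_set
    intro w hw
    by_cases h : w.re ≤ 0
    · left; exact ⟨hw.1, hw.2.1, h⟩
    · right; exact ⟨hw.1, (not_le.1 h).le, hw.2.2⟩
  -- boundedness near -∞
  set C : ℝ := 1 + ∫ w in S, ‖f w‖ ^ 2 with hC
  have hball : ∀ w : ℂ, w.im ≤ -a - 1 → Metric.closedBall w 1 ⊆ U := by
    intro w hw v hv
    apply hlow
    have h1 : |(v - w).im| ≤ 1 := (Complex.abs_im_le_norm _).trans (by simpa [dist_eq_norm] using hv)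
    have := (abs_le.1 h1).2
    simp at this
    linarith
  have hdc : ∀ w : ℂ, w.im ≤ -a - 1 → DiffContOnCl ℂ f (Metric.ball w 1) := by
    intro w hw
    apply DifferentiableOn.diffContOnCl
    rw [closure_ball _ one_ne_zero]
    exact hf.mono (hball w hw)
  have hfb : ∀ w : ℂ, w.im ≤ -a - 1 → ‖f w‖ ≤ C := by
    intro w hw
    have hwU : w ∈ U := hball w hw (by simp)
    obtain ⟨n, hn, hn2⟩ := hshift (-Real.pi) w
    rw [← hfperZ n w hwU]
    apply mean_bound _ _ (hdc _ (by rw [hn2]; exact hw)) _ _ hL2S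
    intro v hv
    refine ⟨hball _ (by rw [hn2]; exact hw) hv, ?_⟩
    have h1 : |(v - (w + n * (2 * Real.pi))).re| ≤ 1 :=
      (Complex.abs_re_le_norm _).trans (by simpa [dist_eq_norm] using hv)
    rw [Complex.sub_re] at h1
    have := abs_le.1 h1
    constructor <;> linarith [hn.1, hn.2]
  have hgb : ∀ w : ℂ, w.im ≤ -a - 2 → ‖g w‖ ≤ C := by
    intro w hw
    have hwU : w ∈ U := hball w (by linarith) (by simp)
    rw [hgf hwU]
    have := Complex.norm_deriv_le_of_forall_mem_sphere_norm_le one_pos (hdc w (by linarith)) (C := C) ?_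
    · simpa using this
    · intro v hv
      apply hfb
      have h1 : |(v - w).im| ≤ 1 := (Complex.abs_im_le_norm _).trans
        (by have := hv; rw [mem_sphere_iff_norm] at this; exact this.le)
      have := (abs_le.1 h1).2
      simp at this
      linarith
  have hC0 : 0 ≤ C := by
    have : 0 ≤ ∫ w in S, ‖f w‖^2 := integral_nonneg fun _ => by positivity
    linarith
  have hgd : DifferentiableOn ℂ g U := (hf.deriv hUo).congr hgf
  -- the key estimate
  have key : ∀ κ : ℝ, 0 < κ → ∀ w ∈ closure U, ‖g w‖ * Real.exp (κ * w.im) ≤ B * Real.exp (κ * a) := by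
    intro κ hκ w0 hw0
    set h : ℂ → ℂ := fun w => g w * Complex.exp (-(Complex.I * κ * w)) with hh
    have hnorm : ∀ w, ‖h w‖ = ‖g w‖ * Real.exp (κ * w.im) := by
      intro w
      rw [hh]; simp only
      rw [norm_mul, Complex.norm_exp]
      congr 2
      simp
    by_contra hcon
    rw [not_le, ← hnorm] at hcon
    have hB0 : 0 ≤ B := by
      obtain ⟨p, hp⟩ := hfr
      exact (norm_nonneg _).trans (hB p hp)
    have hm0 : 0 < ‖h w0‖ := lt_of_le_of_lt (by positivity) hcon
    have hhper : ∀ (n : ℤ) (w : ℂ), w ∈ closure U → ‖h (w + n * (2 * Real.pi))‖ = ‖h w‖ := by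
      intro n w hw
      rw [hnorm, hnorm, hgper n w hw]
      simp
    have hhc : ContinuousOn h (closure U) := by
      apply hg.mul
      apply Continuous.continuousOn; fun_prop
    have hhd : DifferentiableOn ℂ h U := by
      apply hgd.mul
      apply Differentiable.differentiableOn; fun_prop
    -- decay
    obtain ⟨R, hR⟩ : ∃ R : ℝ, ∀ y ≤ -R, C * Real.exp (κ * y) < ‖h w0‖ := by
      have : Tendsto (fun y : ℝ => C * Real.exp (κ * y)) atBot (nhds (C * 0)) := by
        apply Tendsto.const_mul
        apply Real.tendsto_exp_atBot.comp
        exact tendsto_id.const_mul_atBot hκ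
      rw [mul_zero] at this
      have := (this.eventually (gt_mem_nhds hm0))
      rw [eventually_atBot] at this
      obtain ⟨r, hr⟩ := this
      exact ⟨-r, fun y hy => hr y (by linarith)⟩
    set R' := max R (a + 2) with hR'
    have hlowR : ∀ w, w.im ≤ -R' → ‖h w‖ < ‖h w0‖ := by
      intro w hw
      have h1 : w.im ≤ -R := by linarith [le_max_left R (a+2)]
      have h2 : w.im ≤ -a - 2 := by linarith [le_max_right R (a+2)]
      rw [hnorm w]
      refine lt_of_le_of_lt ?_ (hR _ h1)
      exact mul_le_mul_of_nonneg_right (hgb w h2) (Real.exp_pos _).le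
    set Q : Set ℂ := closure U ∩ (Icc 0 (2 * Real.pi) ×ℂ Icc (-R') a) with hQ
    have hQc : IsCompact Q := (isCompact_Icc.reProdIm isCompact_Icc).inter_left isClosed_closure
    have hinQ : ∀ w ∈ closure U, -R' ≤ w.im → ∃ v ∈ Q, ‖h v‖ = ‖h w‖ := by
      intro w hw hw2
      obtain ⟨n, hn, hn2⟩ := hshift 0 w
      refine ⟨_, ⟨hclper n w hw, ?_⟩, hhper n w hw⟩
      rw [Complex.mem_reProdIm, hn2]
      exact ⟨⟨hn.1, by linarith [hn.2]⟩, hw2, hup w hw⟩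
    have hw0R : -R' ≤ w0.im := by
      by_contra hc
      exact lt_irrefl _ (hlowR w0 (not_le.1 hc).le)
    obtain ⟨v0, hv0, hv0e⟩ := hinQ w0 hw0 hw0R
    obtain ⟨w1, hw1, hmax⟩ := hQc.exists_isMaxOn ⟨v0, hv0⟩ (hhc.norm.mono inter_subset_left)
    have hw1ge : ‖h w0‖ ≤ ‖h w1‖ := by rw [← hv0e]; exact hmax hv0
    have hglob : ∀ w ∈ closure U, ‖h w‖ ≤ ‖h w1‖ := by
      intro w hw
      by_cases hc : -R' ≤ w.im
      · obtain ⟨v, hv, hve⟩ := hinQ w hw hc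
        rw [← hve]; exact hmax hv
      · exact (hlowR w (not_le.1 hc).le).le.trans hw1ge
    have hbd : ∀ w ∈ frontier U, ‖h w‖ ≤ B * Real.exp (κ * a) := by
      intro w hw
      rw [hnorm]
      apply mul_le_mul (hB w hw) _ (Real.exp_pos _).le hB0
      apply Real.exp_le_exp.2
      exact mul_le_mul_of_nonneg_left (hup w (frontier_subset_closure hw)) hκ.le
    have hw1U : w1 ∈ U := by
      by_contra hc
      have : w1 ∈ frontier U := by
        rw [hUo.frontier_eq]; exact ⟨hw1.1, hc⟩
      linarith [hbd w1 this]
    have hE := Complex.norm_eqOn_closure_of_isPreconnected_of_isMaxOn hUc hUo ⟨hhd, hhc⟩ hw1U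
      (fun w hw => hglob w (subset_closure hw))
    obtain ⟨p, hp⟩ := hfr
    have h1 := hE (frontier_subset_closure hp)
    simp only [Function.comp, Function.const] at h1
    linarith [hbd p hp]
  intro w hw
  have hlim : Tendsto (fun κ : ℝ => ‖g w‖ * Real.exp (κ * w.im)) (nhdsWithin 0 (Ioi 0)) (nhds (‖g w‖ * Real.exp (0 * w.im))) := by
    apply tendsto_nhdsWithin_of_tendsto_nhds
    apply Continuous.tendsto; fun_prop
  have hlim2 : Tendsto (fun κ : ℝ => B * Real.exp (κ * a)) (nhdsWithin 0 (Ioi 0)) (nhds (B * Real.exp (0 * a))) := by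
    apply tendsto_nhdsWithin_of_tendsto_nhds
    apply Continuous.tendsto; fun_prop
  have := le_of_tendsto_of_tendsto hlim hlim2
    (by filter_upwards [self_mem_nhdsWithin] with κ hκ using key κ hκ w hw)
  simpa using this


lemma ext_deriv (Ω : Set E2) (hΩ : IsOpen Ω) (u : E2 → E2) (hu : ContDiffOn ℝ 3 u (closure Ω)) :
    ∃ G : E2 → E2 →L[ℝ] E2, ContinuousOn G (closure Ω) ∧ (∀ x ∈ Ω, G x = fderiv ℝ u x) ∧
      ∀ x ∈ closure Ω, HasFDerivWithinAt u (G x) (closure Ω) x := by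
  have hu1 : ContDiffOn ℝ (0 + 1) u (closure Ω) := hu.of_le (by norm_num)
  rw [contDiffOn_succ_iff_hasFDerivWithinAt (by simp)] at hu1
  have key : ∀ x ∈ closure Ω, ∃ L : E2 →L[ℝ] E2, Tendsto (fderiv ℝ u) (nhdsWithin x Ω) (nhds L) ∧
      HasFDerivWithinAt u L (closure Ω) x := by
    intro x hx
    obtain ⟨s, hs, -, f', hf', hc⟩ := hu1 x hx
    rw [insert_eq_of_mem hx] at hs
    have hxs : x ∈ s := mem_of_mem_nhdsWithin hx hs
    refine ⟨f' x, ?_, (hf' x hxs).mono_of_mem_nhdsWithin hs⟩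
    obtain ⟨V, hV, hxV, hVs⟩ := mem_nhdsWithin.1 hs
    have hct : Tendsto f' (nhdsWithin x (V ∩ Ω)) (nhds (f' x)) := by
      have := (hc.continuousOn x hxs)
      exact this.mono (fun y hy => hVs ⟨hy.1, subset_closure hy.2⟩)
    rw [nhdsWithin_inter_of_mem (mem_nhdsWithin_of_mem_nhds (hV.mem_nhds hxV))] at hct
    refine hct.congr' ?_
    have hVn : V ∈ nhdsWithin x Ω := mem_nhdsWithin_of_mem_nhds (hV.mem_nhds hxV)
    filter_upwards [hVn, self_mem_nhdsWithin] with y hyV hyΩ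
    have hsn : s ∈ nhds y := by
      apply mem_of_superset ((hV.inter hΩ).mem_nhds ⟨hyV, hyΩ⟩)
      exact fun w hw => hVs ⟨hw.1, subset_closure hw.2⟩
    exact ((hf' y (mem_of_mem_nhds hsn)).hasFDerivAt hsn).fderiv.symm
  refine ⟨extendFrom Ω (fderiv ℝ u), ?_, ?_, ?_⟩
  · apply continuousOn_extendFrom le_rfl
    intro x hx
    obtain ⟨L, hL, -⟩ := key x hx
    exact ⟨L, hL⟩
  · intro x hx
    obtain ⟨L, hL, hd⟩ := key x (subset_closure hx)
    rw [extendFrom_eq (subset_closure hx) hL]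
    have : closure Ω ∈ nhds x := mem_of_superset (hΩ.mem_nhds hx) subset_closure
    exact (hd.hasFDerivAt this).fderiv.symm
  · intro x hx
    obtain ⟨L, hL, hd⟩ := key x hx
    rw [extendFrom_eq hx hL]
    exact hd

def ce : ℂ ≃ₗᵢ[ℝ] E2 := Complex.orthonormalBasisOneI.repr

lemma ce_zero (w : ℂ) : (ce w) 0 = w.re := by
  simp [ce]
lemma ce_one (w : ℂ) : (ce w) 1 = w.im := by
  simp [ce]
lemma ce_symm (x : E2) : ce.symm x = ⟨x 0, x 1⟩ := by
  apply ce.injective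
  rw [ce.apply_symm_apply]
  ext i
  fin_cases i
  · simp [ce_zero]
  · simp [ce_one]
lemma ce_1 : ce 1 = EuclideanSpace.single 0 1 := by
  ext i
  fin_cases i
  · simp [ce_zero]
  · simp [ce_one]
lemma ce_I : ce Complex.I = EuclideanSpace.single 1 1 := by
  ext i
  fin_cases i
  · simp [ce_zero]
  · simp [ce_one]
lemma ce_transl : ce (2 * Real.pi) = transl := by
  ext i
  fin_cases i
  · simp [ce_zero, transl]
  · simp [ce_one, transl]

lemma conf_norm (L : E2 →L[ℝ] E2)
    (hdiv : L (EuclideanSpace.single 0 1) 0 + L (EuclideanSpace.single 1 1) 1 = 0)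
    (hcurl : L (EuclideanSpace.single 0 1) 1 - L (EuclideanSpace.single 1 1) 0 = 0) (v : E2) :
    ‖L v‖ = ‖L (EuclideanSpace.single 0 1)‖ * ‖v‖ := by
  have hv : v = v 0 • EuclideanSpace.single 0 (1:ℝ) + v 1 • EuclideanSpace.single 1 (1:ℝ) := by
    ext i; fin_cases i <;> simp
  have h0 : L v 0 = v 0 * L (EuclideanSpace.single 0 1) 0 + v 1 * L (EuclideanSpace.single 1 1) 0 := by
    conv_lhs => rw [hv]
    simp
  have h1 : L v 1 = v 0 * L (EuclideanSpace.single 0 1) 1 + v 1 * L (EuclideanSpace.single 1 1) 1 := by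
    conv_lhs => rw [hv]
    simp
  rw [EuclideanSpace.norm_eq, EuclideanSpace.norm_eq, EuclideanSpace.norm_eq, ← Real.sqrt_mul (by positivity)]
  congr 1
  simp only [Fin.sum_univ_two, Real.norm_eq_abs, sq_abs]
  rw [h0, h1]
  have e1 : L (EuclideanSpace.single 1 1) 1 = - L (EuclideanSpace.single 0 1) 0 := by linarith
  have e2 : L (EuclideanSpace.single 1 1) 0 = L (EuclideanSpace.single 0 1) 1 := by linarith
  rw [e1, e2]; ring

lemma grad_bound (Ω : Set E2) (hΩ : IsOpen Ω) (hΩc : IsPreconnected Ω)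
    (u : E2 → E2) (G : E2 → E2 →L[ℝ] E2) (hG : ContinuousOn G (closure Ω))
    (hGu : ∀ x ∈ Ω, G x = fderiv ℝ u x)
    (hGd : ∀ x ∈ closure Ω, HasFDerivWithinAt u (G x) (closure Ω) x)
    (hdiv : ∀ x ∈ Ω,
      fderiv ℝ u x (EuclideanSpace.single 0 1) 0 + fderiv ℝ u x (EuclideanSpace.single 1 1) 1 = 0)
    (hcurl : ∀ x ∈ Ω,
      fderiv ℝ u x (EuclideanSpace.single 0 1) 1 - fderiv ℝ u x (EuclideanSpace.single 1 1) 0 = 0)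
    (a : ℝ) (hlow : {x : E2 | x 1 ≤ -a} ⊆ Ω) (hup : ∀ x ∈ closure Ω, x 1 ≤ a)
    (hper : (fun x => x + transl) '' Ω = Ω) (huper : ∀ x ∈ Ω, u (x + transl) = u x)
    (hL2 : IntegrableOn (fun x => ‖u x‖ ^ 2) (Ω ∩ {x : E2 | x 0 ∈ Icc 0 (2 * Real.pi)}))
    (hfr : (frontier Ω).Nonempty) (B : ℝ)
    (hB : ∀ x ∈ frontier Ω, ∃ v : E2, v ≠ 0 ∧ ‖G x v‖ ≤ B * ‖v‖) :
    ∀ x ∈ closure Ω, ‖G x‖ ≤ B := by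
  have hap : ∀ v : E2, ContinuousOn (fun x => G x v) (closure Ω) := fun v => hG.clm_apply continuousOn_const
  have hconf : ∀ x ∈ closure Ω, ∀ v, ‖G x v‖ = ‖G x (EuclideanSpace.single 0 1)‖ * ‖v‖ := by
    intro x hx v
    have : EqOn (fun x => ‖G x v‖) (fun x => ‖G x (EuclideanSpace.single 0 1)‖ * ‖v‖) (closure Ω) := by
      apply EqOn.of_subset_closure (s := Ω) _ (hap v).norm ((hap _).norm.mul continuousOn_const)
        subset_closure le_rfl
      intro y hy
      show ‖G y v‖ = ‖G y (EuclideanSpace.single 0 1)‖ * ‖v‖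
      rw [hGu y hy]
      exact conf_norm _ (hdiv y hy) (hcurl y hy) v
    exact this hx
  suffices h : ∀ x ∈ closure Ω, ‖G x (EuclideanSpace.single 0 1)‖ ≤ B by
    intro x hx
    apply ContinuousLinearMap.opNorm_le_bound _ ((norm_nonneg _).trans (h x hx))
    intro v
    rw [hconf x hx v]
    exact mul_le_mul_of_nonneg_right (h x hx) (norm_nonneg _)
  set U : Set ℂ := ce ⁻¹' Ω with hU
  have hcl : closure U = ce ⁻¹' closure Ω := (ce.toHomeomorph.preimage_closure Ω).symm
  have hfrU : frontier U = ce ⁻¹' frontier Ω := (ce.toHomeomorph.preimage_frontier Ω).symm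
  set f : ℂ → ℂ := fun w => (starRingEnd ℂ) (ce.symm (u (ce w))) with hf
  set g : ℂ → ℂ := fun w => (starRingEnd ℂ) (ce.symm (G (ce w) (EuclideanSpace.single 0 1))) with hg
  have hnf : ∀ w, ‖f w‖ = ‖u (ce w)‖ := by
    intro w; simp [hf]
  have hng : ∀ w, ‖g w‖ = ‖G (ce w) (EuclideanSpace.single 0 1)‖ := by
    intro w; simp [hg]
  have hder : ∀ w ∈ U, HasDerivAt f (g w) w := by
    intro w hw
    have hcn : closure Ω ∈ nhds (ce w) := mem_of_superset (hΩ.mem_nhds hw) subset_closure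
    have h1 : HasFDerivAt u (G (ce w)) (ce w) := (hGd _ (subset_closure hw)).hasFDerivAt hcn
    have h2 : HasFDerivAt f (((Complex.conjCLE : ℂ →L[ℝ] ℂ).comp
        (ce.symm.toContinuousLinearEquiv : E2 →L[ℝ] ℂ)).comp ((G (ce w)).comp
        (ce.toContinuousLinearEquiv : ℂ →L[ℝ] E2))) w := by
      apply HasFDerivAt.comp (g := fun x => (starRingEnd ℂ) (ce.symm x))
      · exact ContinuousLinearMap.hasFDerivAt ((Complex.conjCLE : ℂ →L[ℝ] ℂ).comp
          (ce.symm.toContinuousLinearEquiv : E2 →L[ℝ] ℂ))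
      · apply HasFDerivAt.comp
        · exact h1
        · exact ContinuousLinearMap.hasFDerivAt (ce.toContinuousLinearEquiv : ℂ →L[ℝ] E2)
    rw [hasDerivAt_iff_hasFDerivAt]
    refine hasFDerivAt_of_restrictScalars ℝ h2 ?_
    have hd := hdiv _ hw
    have hc := hcurl _ hw
    rw [← hGu _ hw] at hd hc
    ext v
    have hv : ce v = v.re • EuclideanSpace.single 0 (1:ℝ) + v.im • EuclideanSpace.single 1 (1:ℝ) := by
      ext i; fin_cases i
      · simp [ce_zero]
      · simp [ce_one]
    have e1 : G (ce w) (EuclideanSpace.single 1 1) 1 = - G (ce w) (EuclideanSpace.single 0 1) 0 := by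
      linarith
    have e2 : G (ce w) (EuclideanSpace.single 1 1) 0 = G (ce w) (EuclideanSpace.single 0 1) 1 := by
      linarith
    simp only [hg, ContinuousLinearMap.coe_restrictScalars', ContinuousLinearMap.toSpanSingleton_apply,
      ContinuousLinearMap.comp_apply, smul_eq_mul]
    show v * (starRingEnd ℂ) (ce.symm ((G (ce w)) (EuclideanSpace.single 0 1))) =
      (starRingEnd ℂ) (ce.symm ((G (ce w)) (ce v)))
    rw [hv, map_add, map_smul, map_smul, ce_symm, ce_symm]
    apply Complex.ext
    · simp [e1, e2]
    · simp [e1, e2]; ring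
  have hmain := periodic_max U (hΩ.preimage ce.continuous)
    (by
      have : U = ce.symm '' Ω := by
        ext w; constructor
        · intro hw; exact ⟨ce w, hw, by simp⟩
        · rintro ⟨x, hx, rfl⟩; simpa [hU] using hx
      rw [this]
      exact hΩc.image _ ce.symm.continuous.continuousOn) a
    (fun w hw => hlow (by simpa [ce_one] using hw))
    (fun w hw => by rw [hcl] at hw; simpa [ce_one] using hup _ hw)
    (by
      intro w
      simp only [hU, mem_preimage, map_add, ce_transl]
      conv_rhs => rw [← hper]
      simp)
    f g (fun w hw => (hder w hw).differentiableAt.differentiableWithinAt)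
    (by
      intro w hw
      simp only [hf, map_add, ce_transl]
      rw [huper _ hw])
    (by
      have := (ce.measurePreserving.integrableOn_comp_preimage ce.toHomeomorph.measurableEmbedding).2 hL2
      refine this.congr_fun ?_ ?_ |>.mono_set ?_
      · intro w _; simp [hnf]
      · have h1 : MeasurableSet (Ω ∩ {x : E2 | x 0 ∈ Icc 0 (2 * Real.pi)}) := by
          apply hΩ.measurableSet.inter
          apply measurableSet_Icc.preimage
          fun_prop
        exact h1.preimage ce.continuous.measurable
      · intro w hw
        exact ⟨hw.1, by simpa [ce_zero] using hw.2⟩)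
    (by
      rw [hcl]
      apply Continuous.comp_continuousOn (g := fun x : E2 => (starRingEnd ℂ) (ce.symm x))
      · exact Complex.continuous_conj.comp ce.symm.continuous
      · exact (hap _).comp ce.continuous.continuousOn (fun w hw => hw))
    (fun w hw => (hder w hw).deriv.symm)
    (by
      obtain ⟨p, hp⟩ := hfr
      rw [hfrU]
      exact ⟨ce.symm p, by simpa using hp⟩) B
    (by
      intro w hw
      rw [hfrU] at hw
      obtain ⟨v, hv, hvB⟩ := hB _ hw
      rw [hconf _ (frontier_subset_closure hw)] at hvB
      rw [hng]
      exact le_of_mul_le_mul_right hvB (norm_pos_iff.2 hv))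
  intro x hx
  have := hmain (ce.symm x) (by rw [hcl]; simpa using hx)
  rw [hng] at this
  simpa using this


lemma wind_deriv (ζ ζ' : ℝ → ℂ) (hd : ∀ τ, HasDerivAt ζ (ζ' τ) τ) (hc : Continuous ζ')
    (α β : ℝ) (hαβ : α < β) (hloop : ζ α = ζ β) (p : ℂ) (hp : p ∉ ζ '' Icc α β) :
    HasDerivAt (fun q => ∫ τ in α..β, ζ' τ / (ζ τ - q)) 0 p := by
  have hζc : Continuous ζ := continuous_iff_continuousAt.2 fun τ => (hd τ).continuousAt
  have hK : IsCompact (ζ '' Icc α β) := isCompact_Icc.image hζc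
  obtain ⟨r, hr, hrK⟩ : ∃ r > 0, Metric.ball p r ⊆ (ζ '' Icc α β)ᶜ :=
    Metric.isOpen_iff.1 hK.isClosed.isOpen_compl p hp
  have hdist : ∀ q ∈ Metric.ball p (r/2), ∀ τ ∈ Icc α β, r/2 ≤ ‖ζ τ - q‖ := by
    intro q hq τ hτ
    by_contra hcon
    push Not at hcon
    have : ζ τ ∈ Metric.ball p r := by
      rw [Metric.mem_ball] at *
      calc dist (ζ τ) p ≤ dist (ζ τ) q + dist q p := dist_triangle _ _ _
        _ < r/2 + r/2 := by rw [dist_eq_norm]; linarith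
        _ = r := by ring
    exact hrK this ⟨τ, hτ, rfl⟩
  have hne : ∀ q ∈ Metric.ball p (r/2), ∀ τ ∈ Icc α β, ζ τ - q ≠ 0 := by
    intro q hq τ hτ h0
    have := hdist q hq τ hτ
    rw [h0, norm_zero] at this
    linarith
  have hpb : p ∈ Metric.ball p (r/2) := Metric.mem_ball_self (by linarith)
  obtain ⟨M, hM⟩ := isCompact_Icc.exists_bound_of_continuousOn (hc.continuousOn (s := Icc α β))
  have hI : uIcc α β = Icc α β := uIcc_of_le hαβ.le
  have hI' : ∀ t ∈ uIoc α β, t ∈ Icc α β := by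
    intro t ht; rw [uIoc_of_le hαβ.le] at ht; exact ⟨ht.1.le, ht.2⟩
  have hcont : ∀ q ∈ Metric.ball p (r/2), ContinuousOn (fun τ => ζ' τ / (ζ τ - q)) (uIcc α β) := by
    intro q hq
    rw [hI]
    exact hc.continuousOn.div (hζc.continuousOn.sub continuousOn_const) (hne q hq)
  have hcont2 : ContinuousOn (fun τ => ζ' τ / (ζ τ - p)^2) (uIcc α β) := by
    rw [hI]
    exact hc.continuousOn.div ((hζc.continuousOn.sub continuousOn_const).pow 2)
      (fun τ hτ => pow_ne_zero 2 (hne p hpb τ hτ))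
  have h := (intervalIntegral.hasDerivAt_integral_of_dominated_loc_of_deriv_le
    (F := fun q τ => ζ' τ / (ζ τ - q)) (F' := fun q τ => ζ' τ / (ζ τ - q)^2) (x₀ := p)
    (s := Metric.ball p (r/2)) (μ := volume) (a := α) (b := β)
    (bound := fun _ => M / (r/2)^2)
    (Metric.ball_mem_nhds _ (by linarith))
    (by
      filter_upwards [Metric.ball_mem_nhds p (show 0 < r/2 by linarith)] with q hq
      exact ((hcont q hq).intervalIntegrable).def'.aestronglyMeasurable)
    ((hcont p hpb).intervalIntegrable)
    (hcont2.intervalIntegrable.def'.aestronglyMeasurable)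
    (by
      refine Eventually.of_forall fun t ht q hq => ?_
      have h1 := hdist q hq t (hI' t ht)
      have h2 := hM t (hI' t ht)
      rw [norm_div, norm_pow]
      have hM0 : 0 ≤ M := (norm_nonneg _).trans h2
      gcongr)
    (by simp)
    (by
      refine Eventually.of_forall fun t ht q hq => ?_
      have h0 := hne q hq t (hI' t ht)
      have := ((hasDerivAt_const q (ζ' t)).div ((hasDerivAt_const q (ζ t)).sub (hasDerivAt_id q)) h0)
      convert! this using 1
      simp)).2
  have h0 : ∫ τ in α..β, ζ' τ / (ζ τ - p)^2 = 0 := by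
    have := intervalIntegral.integral_eq_sub_of_hasDerivAt
      (f := fun τ => -(ζ τ - p)⁻¹) (f' := fun τ => ζ' τ / (ζ τ - p)^2) (a := α) (b := β)
      (by
        intro τ hτ
        rw [hI] at hτ
        have := (((hd τ).sub_const p).inv (hne p hpb τ hτ)).neg
        convert! this using 1
        ring) hcont2.intervalIntegrable
    rw [this, hloop]; simp
  rw [h0] at h
  exact h

lemma re_lower (y' y : ℂ) (s ε : ℝ) (hε : 0 < ε) (h1 : ‖y' - 1‖ ≤ 1/10)
    (h2 : ‖y - s‖ ≤ |s| / 10) :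
    y^2 + ε^2 ≠ 0 ∧ 1 / (4 * (s^2 + ε^2)) ≤ (y' / (y^2 + ε^2)).re := by
  set N : ℝ := s^2 + ε^2 with hN
  have hNpos : 0 < N := by positivity
  have hy2 : ‖y^2 - (s:ℂ)^2‖ ≤ 21/100 * s^2 := by
    have : y^2 - (s:ℂ)^2 = (y - s) * (y - s) + 2 * s * (y - s) := by ring
    rw [this]
    refine (norm_add_le _ _).trans ?_
    rw [norm_mul, norm_mul, norm_mul, Complex.norm_real, Real.norm_eq_abs, Complex.norm_ofNat]
    have := norm_nonneg (y - s)
    have hs := abs_nonneg s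
    have : s^2 = |s|^2 := (sq_abs s).symm
    nlinarith
  set D : ℂ := y^2 + ε^2 with hD
  have hDN : ‖D - N‖ ≤ 21/100 * N := by
    have : D - N = y^2 - (s:ℂ)^2 := by rw [hD, hN]; push_cast; ring
    rw [this]
    refine hy2.trans ?_
    nlinarith [sq_nonneg ε]
  have hD1 : ‖D‖ ≤ 121/100 * N := by
    have : D = (D - N) + N := by ring
    rw [this]
    refine (norm_add_le _ _).trans ?_
    rw [Complex.norm_real, Real.norm_of_nonneg hNpos.le]
    linarith
  have hD2 : 79/100 * N ≤ ‖D‖ := by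
    have := norm_sub_norm_le (N:ℂ) D
    rw [norm_sub_rev, Complex.norm_real, Real.norm_of_nonneg hNpos.le] at this
    linarith
  have hDne : D ≠ 0 := by
    intro h; rw [h, norm_zero] at hD2; linarith
  refine ⟨hDne, ?_⟩
  have hre : 66/100 * N ≤ (y' * (starRingEnd ℂ) D).re := by
    have e : y' * (starRingEnd ℂ) D = N + ((y' - 1) * (starRingEnd ℂ) D + (starRingEnd ℂ) (D - N)) := by
      simp; ring
    have hn : ‖(y' - 1) * (starRingEnd ℂ) D + (starRingEnd ℂ) (D - N)‖ ≤ 34/100 * N := by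
      refine (norm_add_le _ _).trans ?_
      rw [norm_mul, RCLike.norm_conj, RCLike.norm_conj]
      have := norm_nonneg (y' - 1)
      have := norm_nonneg D
      nlinarith
    have := (abs_le.1 ((Complex.abs_re_le_norm _).trans hn)).1
    rw [e, Complex.add_re, Complex.ofReal_re]
    linarith
  have hdiv : (y' / D).re = (y' * (starRingEnd ℂ) D).re / ‖D‖^2 := by
    rw [div_eq_mul_inv, Complex.inv_def, ← mul_assoc, Complex.re_mul_ofReal, Complex.normSq_eq_norm_sq,
      div_eq_mul_inv]
  rw [hdiv, div_le_div_iff₀ (by positivity) (by positivity)]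
  have : ‖D‖^2 ≤ (121/100 * N)^2 := by gcongr
  nlinarith [mul_pos hNpos hNpos]

lemma jump_pos (y y' : ℝ → ℂ) (hd : ∀ τ, HasDerivAt y (y' τ) τ) (hc : Continuous y')
    (α β : ℝ) (hα : α < 0) (hβ : 0 < β) (h0 : y 0 = 0) (h1 : y' 0 = 1)
    (hinj : ∀ τ ∈ Icc α β, y τ = 0 → τ = 0) :
    ∃ ε : ℝ, 0 < ε ∧ (∀ τ ∈ Icc α β, y τ ^ 2 + (ε:ℂ)^2 ≠ 0) ∧
      ∫ τ in α..β, ε * y' τ / (y τ ^ 2 + (ε:ℂ)^2) ≠ 0 := by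
  have hyc : Continuous y := continuous_iff_continuousAt.2 fun τ => (hd τ).continuousAt
  obtain ⟨r0, hr0, hr0'⟩ := Metric.continuous_iff.1 hc 0 (1/10) (by norm_num)
  obtain ⟨r, hr, hrr0, hrα, hrβ⟩ : ∃ r, 0 < r ∧ r < r0 ∧ r < -α ∧ r < β := by
    refine ⟨min (min r0 (-α)) β / 2, ?_, ?_, ?_, ?_⟩
    · have : 0 < min (min r0 (-α)) β := lt_min (lt_min hr0 (by linarith)) hβ
      linarith
    all_goals
      have : 0 < min (min r0 (-α)) β := lt_min (lt_min hr0 (by linarith)) hβ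
      have := min_le_left (min r0 (-α)) β
      have := min_le_right (min r0 (-α)) β
      have := min_le_left r0 (-α)
      have := min_le_right r0 (-α)
      linarith
  have hy' : ∀ τ, |τ| ≤ r → ‖y' τ - 1‖ ≤ 1/10 := by
    intro τ hτ
    have := hr0' τ (by rw [Real.dist_eq, sub_zero]; linarith)
    rw [h1, dist_eq_norm] at this
    exact this.le
  have hy : ∀ τ, |τ| ≤ r → ‖y τ - τ‖ ≤ |τ| / 10 := by
    intro τ hτ
    have := (convex_Icc (-r) r).norm_image_sub_le_of_norm_hasDerivWithin_le
      (f := fun τ : ℝ => y τ - τ) (f' := fun τ => y' τ - 1) (C := 1/10) (x := 0) (y := τ)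
      (fun x hx => ((hd x).sub (hasDerivAt_id x).ofReal_comp).hasDerivWithinAt)
      (fun x hx => hy' x (abs_le.2 hx)) (by constructor <;> linarith) (abs_le.1 hτ)
    simp only [h0, Complex.ofReal_zero, sub_zero, Real.norm_eq_abs] at this
    linarith
  -- far part
  obtain ⟨m, hm, hmy⟩ : ∃ m > 0, ∀ τ ∈ Icc α β, r ≤ |τ| → m ≤ ‖y τ‖ := by
    have hcomp : IsCompact (Icc α β ∩ {τ | r ≤ |τ|}) :=
      isCompact_Icc.inter_right (isClosed_le continuous_const continuous_abs)
    have hne : (Icc α β ∩ {τ | r ≤ |τ|}).Nonempty :=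
      ⟨β, ⟨by linarith, le_rfl⟩, by simp only [mem_ofPred_eq]; rw [abs_of_pos hβ]; linarith⟩
    obtain ⟨τ0, hτ0, hmin⟩ := hcomp.exists_isMinOn hne hyc.norm.continuousOn
    refine ⟨‖y τ0‖, ?_, fun τ h1 h2 => hmin ⟨h1, h2⟩⟩
    rw [gt_iff_lt, norm_pos_iff]
    intro h
    have := hinj τ0 hτ0.1 h
    have h3 := hτ0.2
    simp only [mem_ofPred_eq, this, abs_zero] at h3
    linarith
  obtain ⟨M, hM⟩ := isCompact_Icc.exists_bound_of_continuousOn (hc.continuousOn (s := Icc α β))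
  have hM0 : 0 ≤ M := (norm_nonneg _).trans (hM 0 ⟨hα.le, hβ.le⟩)
  set c : ℝ := 2 * M / m^2 with hcdef
  have hc0 : 0 ≤ c := by positivity
  obtain ⟨ε, hε, hεr, hεm, hεc⟩ : ∃ ε, 0 < ε ∧ ε < r ∧ ε ≤ m/2 ∧ ε * (c * (β - α)) < 1/4 := by
    have hcb : 0 ≤ c * (β - α) := mul_nonneg hc0 (by linarith)
    have hq : 0 < (1/8) / (c * (β - α) + 1) := by positivity
    have hpos : 0 < min (min (r/2) (m/2)) ((1/8) / (c * (β - α) + 1)) :=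
      lt_min (lt_min (by linarith) (by linarith)) hq
    refine ⟨min (min (r/2) (m/2)) ((1/8) / (c * (β - α) + 1)), hpos, ?_, ?_, ?_⟩
    · have := min_le_left (min (r/2) (m/2)) ((1/8) / (c * (β - α) + 1))
      have := min_le_left (r/2) (m/2)
      linarith
    · have := min_le_left (min (r/2) (m/2)) ((1/8) / (c * (β - α) + 1))
      have := min_le_right (r/2) (m/2)
      linarith
    · have h3 := min_le_right (min (r/2) (m/2)) ((1/8) / (c * (β - α) + 1))
      rw [le_div_iff₀ (by linarith)] at h3
      linarith
  have hfar : ∀ τ ∈ Icc α β, r ≤ |τ| → y τ ^ 2 + (ε:ℂ)^2 ≠ 0 ∧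
      ‖ε * y' τ / (y τ ^ 2 + (ε:ℂ)^2)‖ ≤ ε * c := by
    intro τ hτ hτr
    have h2 := hmy τ hτ hτr
    have h3 : m^2/2 ≤ ‖y τ ^ 2 + (ε:ℂ)^2‖ := by
      have h4 := norm_sub_norm_le (y τ ^ 2) (-(ε:ℂ)^2)
      rw [norm_pow, norm_neg, norm_pow, Complex.norm_real, Real.norm_of_nonneg hε.le] at h4
      have : y τ ^ 2 - -(ε:ℂ)^2 = y τ ^ 2 + (ε:ℂ)^2 := by ring
      rw [this] at h4
      have : m^2 ≤ ‖y τ‖^2 := by gcongr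
      nlinarith
    have hne : y τ ^ 2 + (ε:ℂ)^2 ≠ 0 := by
      intro h; rw [h, norm_zero] at h3; nlinarith
    refine ⟨hne, ?_⟩
    rw [norm_div, norm_mul, Complex.norm_real, Real.norm_of_nonneg hε.le]
    calc ε * ‖y' τ‖ / ‖y τ ^ 2 + (ε:ℂ)^2‖ ≤ ε * M / (m^2/2) := by
          gcongr; exact hM τ hτ
      _ = ε * c := by rw [hcdef]; field_simp
  have hnear : ∀ τ, |τ| ≤ r → y τ ^ 2 + (ε:ℂ)^2 ≠ 0 ∧
      ε * (1 / (4 * (τ^2 + ε^2))) ≤ (ε * y' τ / (y τ ^ 2 + (ε:ℂ)^2)).re := by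
    intro τ hτ
    obtain ⟨h2, h3⟩ := re_lower (y' τ) (y τ) τ ε hε (hy' τ hτ) (hy τ hτ)
    refine ⟨h2, ?_⟩
    rw [mul_div_assoc, Complex.re_ofReal_mul]
    exact mul_le_mul_of_nonneg_left h3 hε.le
  have hne : ∀ τ ∈ Icc α β, y τ ^ 2 + (ε:ℂ)^2 ≠ 0 := by
    intro τ hτ
    rcases le_total |τ| r with h | h
    · exact (hnear τ h).1
    · exact (hfar τ hτ h).1
  refine ⟨ε, hε, hne, ?_⟩
  set φ : ℝ → ℂ := fun τ => ε * y' τ / (y τ ^ 2 + (ε:ℂ)^2) with hφ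
  have hφc : ContinuousOn φ (Icc α β) :=
    (continuousOn_const.mul hc.continuousOn).div ((hyc.continuousOn.pow 2).add continuousOn_const) hne
  have hφre : ContinuousOn (fun τ => (φ τ).re) (Icc α β) := Complex.continuous_re.comp_continuousOn hφc
  have hlow : ∀ τ ∈ Icc α β, -(ε * c) ≤ (φ τ).re := by
    intro τ hτ
    rcases le_total |τ| r with h | h
    · have := (hnear τ h).2
      have h5 : 0 ≤ ε * (1 / (4 * (τ^2 + ε^2))) := by positivity
      have : 0 ≤ ε * c := by positivity
      linarith
    · exact (abs_le.1 ((Complex.abs_re_le_norm _).trans (hfar τ hτ h).2)).1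
  have hmid : ∀ τ ∈ Icc (-ε) ε, 1 / (8 * ε) ≤ (φ τ).re := by
    intro τ hτ
    have hτ' : |τ| ≤ ε := abs_le.2 hτ
    refine le_trans ?_ (hnear τ (by linarith)).2
    have : τ^2 ≤ ε^2 := sq_le_sq' hτ.1 hτ.2
    calc 1 / (8 * ε) = ε * (1 / (4 * (ε^2 + ε^2))) := by field_simp; norm_num
      _ ≤ _ := by gcongr
  intro hzero
  have hint : ∀ a b, α ≤ a → a ≤ b → b ≤ β → IntervalIntegrable (fun τ => (φ τ).re) volume a b := by
    intro a b ha hab hb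
    apply ContinuousOn.intervalIntegrable
    rw [uIcc_of_le hab]
    exact hφre.mono (Icc_subset_Icc ha hb)
  have hre : ∫ τ in α..β, (φ τ).re = 0 := by
    have hii : IntervalIntegrable φ volume α β := by
      apply ContinuousOn.intervalIntegrable
      rw [uIcc_of_le (by linarith)]
      exact hφc
    have := Complex.reCLM.intervalIntegral_comp_comm hii
    simp only [Complex.reCLM_apply] at this
    rw [this, hzero]; simp
  have i1 := hint α (-ε) le_rfl (by linarith) (by linarith)
  have i2 := hint (-ε) ε (by linarith) (by linarith) (by linarith)
  have i3 := hint ε β (by linarith) (by linarith) le_rfl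
  rw [← intervalIntegral.integral_add_adjacent_intervals i1 (i2.trans i3),
    ← intervalIntegral.integral_add_adjacent_intervals i2 i3] at hre
  have l1 := intervalIntegral.integral_mono_on (show α ≤ -ε by linarith) (by simp) i1
    (fun τ hτ => hlow τ ⟨hτ.1, by linarith [hτ.2]⟩)
  have l2 := intervalIntegral.integral_mono_on (show -ε ≤ ε by linarith) (by simp) i2
    (fun τ hτ => hmid τ hτ)
  have l3 := intervalIntegral.integral_mono_on (show ε ≤ β by linarith) (by simp) i3
    (fun τ hτ => hlow τ ⟨by linarith [hτ.1], hτ.2⟩)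
  simp only [intervalIntegral.integral_const, smul_eq_mul] at l1 l2 l3
  have : (ε - -ε) * (1 / (8 * ε)) = 1/4 := by field_simp; norm_num
  rw [this] at l2
  nlinarith [mul_nonneg hε.le hc0]


lemma loop_contra (ζ ζ' : ℝ → ℂ) (hd : ∀ τ, HasDerivAt ζ (ζ' τ) τ) (hc : Continuous ζ')
    (hne : ∀ τ, ζ' τ ≠ 0) (α β : ℝ) (hαβ : α < β) (hloop : ζ α = ζ β)
    (hinj : ∀ s ∈ Icc α β, ∀ t ∈ Icc α β, s < t → ζ s = ζ t → s = α ∧ t = β)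
    (U1 U2 : Set ℂ) (hU1 : IsOpen U1) (hU2 : IsOpen U2) (hc1 : IsPreconnected U1)
    (hc2 : IsPreconnected U2) (hd1 : ∀ τ, ζ τ ∉ U1) (hd2 : ∀ τ, ζ τ ∉ U2)
    (hdense : Dense (U1 ∪ U2)) (hu1 : ∀ R : ℝ, ∃ p ∈ U1, R < ‖p‖)
    (hu2 : ∀ R : ℝ, ∃ p ∈ U2, R < ‖p‖) : False := by
  have hζc : Continuous ζ := continuous_iff_continuousAt.2 fun τ => (hd τ).continuousAt
  set W : ℂ → ℂ := fun q => ∫ τ in α..β, ζ' τ / (ζ τ - q) with hW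
  obtain ⟨M, hM⟩ := isCompact_Icc.exists_bound_of_continuousOn (hc.continuousOn (s := Icc α β))
  obtain ⟨R, hR⟩ := isCompact_Icc.exists_bound_of_continuousOn (hζc.continuousOn (s := Icc α β))
  have hM0 : 0 ≤ M := (norm_nonneg _).trans (hM α ⟨le_rfl, hαβ.le⟩)
  have hsub : ∀ t ∈ uIoc α β, t ∈ Icc α β := by
    intro t ht
    rw [uIoc_of_le hαβ.le] at ht
    exact ⟨ht.1.le, ht.2⟩
  have hdecay : ∀ p : ℂ, R < ‖p‖ → ‖W p‖ ≤ M / (‖p‖ - R) * (β - α) := by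
    intro p hp
    have := intervalIntegral.norm_integral_le_of_norm_le_const (a := α) (b := β)
      (f := fun τ => ζ' τ / (ζ τ - p)) (C := M / (‖p‖ - R)) (by
        intro t ht
        have ht' := hsub t ht
        rw [norm_div]
        have h1 : ‖p‖ - R ≤ ‖ζ t - p‖ := by
          have := norm_sub_norm_le p (ζ t)
          rw [norm_sub_rev]
          linarith [hR t ht']
        exact div_le_div₀ hM0 (hM t ht') (by linarith) h1)
    rwa [abs_of_pos (by linarith)] at this
  have hzero : ∀ U : Set ℂ, IsOpen U → IsPreconnected U → (∀ τ, ζ τ ∉ U) →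
      (∀ R : ℝ, ∃ p ∈ U, R < ‖p‖) → ∀ p ∈ U, W p = 0 := by
    intro U hU hcU hdU huU p hp
    have hder : ∀ q ∈ U, HasDerivAt W 0 q := by
      intro q hq
      refine wind_deriv ζ ζ' hd hc α β hαβ hloop q ?_
      rintro ⟨τ, -, rfl⟩
      exact hdU τ hq
    have hconst : ∀ q ∈ U, W p = W q := fun q hq =>
      hU.is_const_of_deriv_eq_zero hcU (fun q hq => (hder q hq).differentiableAt.differentiableWithinAt)
        (fun q hq => (hder q hq).deriv) hp hq
    by_contra hne0
    have hpos : 0 < ‖W p‖ := norm_pos_iff.2 hne0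
    obtain ⟨q, hq, hqR⟩ := huU (R + M * (β - α) / ‖W p‖ + 1)
    have hba : 0 ≤ M * (β - α) / ‖W p‖ := div_nonneg (mul_nonneg hM0 (by linarith)) hpos.le
    have h1 := hdecay q (by linarith)
    rw [← hconst q hq, div_mul_eq_mul_div, le_div_iff₀ (by linarith)] at h1
    have h2 : M * (β - α) / ‖W p‖ * ‖W p‖ = M * (β - α) := div_mul_cancel₀ _ hpos.ne'
    nlinarith
  have hW0 : ∀ p ∈ U1 ∪ U2, W p = 0 := by
    rintro p (hp | hp)
    · exact hzero U1 hU1 hc1 hd1 hu1 p hp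
    · exact hzero U2 hU2 hc2 hd2 hu2 p hp
  have hWoff : ∀ p, p ∉ ζ '' Icc α β → W p = 0 := by
    intro p hp
    have hcont : ContinuousAt W p := (wind_deriv ζ ζ' hd hc α β hαβ hloop p hp).continuousAt
    by_contra hne0
    have hev : ∀ᶠ q in nhds p, W q ≠ 0 := hcont.eventually_ne hne0
    obtain ⟨q, hq1, hq2⟩ := hdense.inter_nhds_nonempty hev
    exact hq2 (hW0 q hq1)
  set γ : ℝ := (α + β) / 2 with hγ
  set v : ℂ := ζ' γ with hv
  have hv0 : v ≠ 0 := hne γ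
  obtain ⟨ε, hε, hεne, hεint⟩ := jump_pos (fun τ => (ζ (τ + γ) - ζ γ) / v) (fun τ => ζ' (τ + γ) / v)
    (fun τ => by
      have := (hd (τ + γ)).comp_add_const τ γ
      exact (this.sub_const _).div_const v)
    (by fun_prop) (α - γ) (β - γ) (by rw [hγ]; linarith) (by rw [hγ]; linarith)
    (by simp) (by simp [hv, hne γ]) (by
      intro τ hτ h0
      have h1 : ζ (τ + γ) = ζ γ := by
        rcases div_eq_zero_iff.1 h0 with h | h
        · exact sub_eq_zero.1 h
        · exact absurd h hv0
      have hm1 : τ + γ ∈ Icc α β := ⟨by linarith [hτ.1], by linarith [hτ.2]⟩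
      have hm2 : γ ∈ Icc α β := ⟨by rw [hγ]; linarith, by rw [hγ]; linarith⟩
      rcases lt_trichotomy τ 0 with h | h | h
      · have := (hinj _ hm1 _ hm2 (by linarith) h1).2
        rw [hγ] at this; linarith
      · exact h
      · have := (hinj _ hm2 _ hm1 (by linarith) h1.symm).1
        rw [hγ] at this; linarith)
  have hfac : ∀ τ, (ζ τ - (ζ γ + Complex.I * ε * v)) * (ζ τ - (ζ γ - Complex.I * ε * v)) =
      v ^ 2 * (((ζ τ - ζ γ) / v) ^ 2 + (ε:ℂ) ^ 2) := by
    intro τ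
    field_simp
    ring_nf
    simp
  have hnz : ∀ τ ∈ Icc α β, (ζ τ - (ζ γ + Complex.I * ε * v)) * (ζ τ - (ζ γ - Complex.I * ε * v)) ≠ 0 := by
    intro τ hτ
    rw [hfac]
    have := hεne (τ - γ) ⟨by linarith [hτ.1], by linarith [hτ.2]⟩
    simp only [sub_add_cancel] at this
    exact mul_ne_zero (pow_ne_zero 2 hv0) this
  have hp1 : ζ γ + Complex.I * ε * v ∉ ζ '' Icc α β := by
    rintro ⟨τ, hτ, h⟩
    exact hnz τ hτ (by rw [h]; simp)
  have hp2 : ζ γ - Complex.I * ε * v ∉ ζ '' Icc α β := by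
    rintro ⟨τ, hτ, h⟩
    exact hnz τ hτ (by rw [h]; simp)
  have hI : uIcc α β = Icc α β := uIcc_of_le hαβ.le
  have hint : ∀ p, p ∉ ζ '' Icc α β → IntervalIntegrable (fun τ => ζ' τ / (ζ τ - p)) volume α β := by
    intro p hp
    apply ContinuousOn.intervalIntegrable
    rw [hI]
    refine hc.continuousOn.div (hζc.sub continuous_const).continuousOn ?_
    intro τ hτ h0
    exact hp ⟨τ, hτ, sub_eq_zero.1 h0⟩
  have hdiff : W (ζ γ + Complex.I * ε * v) - W (ζ γ - Complex.I * ε * v) =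
      2 * Complex.I * ∫ τ in α..β, (ε:ℂ) * (ζ' τ / v) / (((ζ τ - ζ γ) / v) ^ 2 + (ε:ℂ)^2) := by
    rw [hW]
    simp only
    rw [← intervalIntegral.integral_sub (hint _ hp1) (hint _ hp2), ← intervalIntegral.integral_const_mul]
    apply intervalIntegral.integral_congr
    intro τ hτ
    rw [hI] at hτ
    have hh := hnz τ hτ
    have h1 := left_ne_zero_of_mul hh
    have h2 := right_ne_zero_of_mul hh
    have h3 : ((ζ τ - ζ γ) / v) ^ 2 + (ε:ℂ)^2 ≠ 0 := by
      intro h; rw [hfac, h, mul_zero] at hh; exact hh rfl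
    simp only
    rw [div_sub_div _ _ h1 h2, hfac, eq_comm, ← mul_div_assoc, div_eq_div_iff h3 (mul_ne_zero (pow_ne_zero 2 hv0) h3)]
    field_simp
    ring
  rw [hWoff _ hp1, hWoff _ hp2, sub_zero] at hdiff
  have hsh := intervalIntegral.integral_comp_add_right (a := α - γ) (b := β - γ)
    (fun τ => (ε:ℂ) * (ζ' τ / v) / (((ζ τ - ζ γ) / v) ^ 2 + (ε:ℂ)^2)) γ
  simp only [sub_add_cancel] at hsh
  rw [← hsh] at hdiff
  have h2 : (2 * Complex.I) ≠ 0 := by simp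
  rcases mul_eq_zero.1 hdiff.symm with h | h
  · exact h2 h
  · exact hεint h


lemma slab_facts {F : Type*} [NormedAddCommGroup F] [NormedSpace ℝ F] (T A : ℝ) (hT : 0 < T)
    (f : ℝ × ℝ → F) (n : ℕ) (hn : 2 ≤ n) (hf : ContDiffOn ℝ n f (univ ×ˢ Icc (0:ℝ) T))
    (hb : ∀ p ∈ (univ ×ˢ Icc (0:ℝ) T : Set (ℝ × ℝ)), ∀ i : ℕ, i ≤ n →
      ‖iteratedFDerivWithin ℝ i f (univ ×ˢ Icc (0:ℝ) T) p‖ ≤ A) :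
    ∃ f' : ℝ × ℝ → (ℝ × ℝ →L[ℝ] F),
      (∀ p ∈ (univ ×ˢ Icc (0:ℝ) T : Set (ℝ × ℝ)), HasFDerivWithinAt f (f' p) (univ ×ˢ Icc (0:ℝ) T) p) ∧
      (∀ p ∈ (univ ×ˢ Icc (0:ℝ) T : Set (ℝ × ℝ)), ‖f p‖ ≤ A ∧ ‖f' p‖ ≤ A) ∧
      ContinuousOn f' (univ ×ˢ Icc (0:ℝ) T) ∧
      (∀ p ∈ (univ ×ˢ Icc (0:ℝ) T : Set (ℝ × ℝ)), ∀ q ∈ (univ ×ˢ Icc (0:ℝ) T : Set (ℝ × ℝ)),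
        ‖f q - f p‖ ≤ A * ‖q - p‖) ∧
      (∀ p ∈ (univ ×ˢ Icc (0:ℝ) T : Set (ℝ × ℝ)), ∀ q ∈ (univ ×ˢ Icc (0:ℝ) T : Set (ℝ × ℝ)),
        ‖f q - f p - f' p (q - p)‖ ≤ A * ‖q - p‖ ^ 2) := by
  set S : Set (ℝ × ℝ) := univ ×ˢ Icc (0:ℝ) T with hS
  have hu : UniqueDiffOn ℝ S := uniqueDiffOn_univ.prod (uniqueDiffOn_Icc hT)
  have hcv : Convex ℝ S := convex_univ.prod (convex_Icc 0 T)
  have hd : ∀ p ∈ S, HasFDerivWithinAt f (fderivWithin ℝ f S p) S p := fun p hp =>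
    ((hf.differentiableOn (by norm_cast; omega)) p hp).hasFDerivWithinAt
  have hf' : ContDiffOn ℝ 1 (fderivWithin ℝ f S) S :=
    hf.fderivWithin hu (by norm_cast)
  have hb1 : ∀ p ∈ S, ‖fderivWithin ℝ f S p‖ ≤ A := by
    intro p hp
    rw [← norm_iteratedFDerivWithin_one f (hu p hp)]
    exact hb p hp 1 (by omega)
  have hb2 : ∀ p ∈ S, ‖fderivWithin ℝ (fderivWithin ℝ f S) S p‖ ≤ A := by
    intro p hp
    rw [← norm_iteratedFDerivWithin_one _ (hu p hp), norm_iteratedFDerivWithin_fderivWithin hu hp]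
    exact hb p hp 2 hn
  refine ⟨fderivWithin ℝ f S, hd, ?_, hf'.continuousOn, ?_, ?_⟩
  · intro p hp
    refine ⟨?_, hb1 p hp⟩
    have := hb p hp 0 (by omega)
    rwa [norm_iteratedFDerivWithin_zero] at this
  · intro p hp q hq
    exact hcv.norm_image_sub_le_of_norm_hasFDerivWithin_le hd hb1 hp hq
  · intro p hp q hq
    have hA0 : 0 ≤ A := (norm_nonneg _).trans (hb1 p hp)
    have hlip : ∀ x ∈ S, ‖fderivWithin ℝ f S x - fderivWithin ℝ f S p‖ ≤ A * ‖x - p‖ := fun x hx =>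
      hcv.norm_image_sub_le_of_norm_fderivWithin_le (hf'.differentiableOn (by norm_num)) hb2 hp hx
    have hcv2 : Convex ℝ (S ∩ Metric.closedBall p ‖q - p‖) := hcv.inter (convex_closedBall _ _)
    have := hcv2.norm_image_sub_le_of_norm_hasFDerivWithin_le' (f := f) (f' := fderivWithin ℝ f S)
      (φ := fderivWithin ℝ f S p) (C := A * ‖q - p‖) (x := p) (y := q)
      (fun x hx => (hd x hx.1).mono inter_subset_left)
      (fun x hx => (hlip x hx.1).trans (by
        have := hx.2
        rw [Metric.mem_closedBall, dist_eq_norm] at this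
        exact mul_le_mul_of_nonneg_left this hA0))
      ⟨hp, by simp⟩ ⟨hq, by simp [dist_eq_norm]⟩
    rw [pow_two, ← mul_assoc]
    exact this


lemma xvec_norm : ‖xvec‖ = 1 := by
  rw [EuclideanSpace.norm_eq]
  simp [xvec]

lemma perp_lin (w d : E2) (hd : d ≠ 0) (h : rinner w (perpv d) = 0) : ∃ c : ℝ, w = c • d := by
  have h1 : w 0 * d 1 = w 1 * d 0 := by
    simp [rinner, perpv, PiLp.inner_apply, Fin.sum_univ_two] at h
    linarith
  by_cases h0 : d 0 = 0
  · have h2 : d 1 ≠ 0 := by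
      intro h2
      apply hd
      ext i; fin_cases i
      · simpa using h0
      · simpa using h2
    refine ⟨w 1 / d 1, ?_⟩
    ext i; fin_cases i
    · simp [h0] at h1 ⊢
      tauto
    · simp [h2]
  · refine ⟨w 0 / d 0, ?_⟩
    ext i; fin_cases i
    · simp [h0]
    · simp
      field_simp
      linarith

lemma prod_norm_le (a b : ℝ) : ‖((a, b) : ℝ × ℝ)‖ ≤ |a| + |b| := by
  rw [Prod.norm_def]
  simp only [Real.norm_eq_abs]
  exact max_le (by linarith [abs_nonneg b]) (by linarith [abs_nonneg a])

lemma curve_facts {ρ1 ρ2 σ grav T A : ℝ} (hT : 0 < T) (hA : 1 ≤ A)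
    (D : TwoFluid ρ1 ρ2 σ grav T A) : ∃ dz tz : ℝ → ℝ → E2,
    (∀ t ∈ Icc (0:ℝ) T, ∀ α, HasDerivAt (fun a => D.z a t) (dz α t) α) ∧
    (∀ t ∈ Icc (0:ℝ) T, Continuous (fun α => dz α t)) ∧
    (∀ t ∈ Icc (0:ℝ) T, ∀ α, A⁻¹ ≤ ‖dz α t‖) ∧
    (∀ t ∈ Icc (0:ℝ) T, ∀ α, ‖D.z α t - α • xvec‖ ≤ A) ∧
    (∀ s ∈ Icc (0:ℝ) T, ∀ t ∈ Icc (0:ℝ) T, ∀ α β,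
      ‖D.z β s - D.z α t‖ ≤ (A + 1) * (|β - α| + |s - t|)) ∧
    (∀ s ∈ Icc (0:ℝ) T, ∀ t ∈ Icc (0:ℝ) T, ∀ α β,
      ‖D.z β s - D.z α t - (β - α) • dz α t - (s - t) • tz α t‖ ≤ A * (|β - α| + |s - t|) ^ 2) ∧
    (∀ t ∈ Icc (0:ℝ) T, ∀ α, ∃ c : ℝ, |c| ≤ 2 * A ^ 2 ∧
      D.u1 (D.z α t) t - tz α t = c • dz α t) := by
  obtain ⟨f', hd, hb, hcont, hlip, htay⟩ := slab_facts T A hT _ 4 (by norm_num) D.hz_smooth D.hz_bound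
  obtain ⟨V', hVd, hVb, hVcont, -, -⟩ := slab_facts T A hT _ 3 (by norm_num) D.hv1_smooth D.hv1_bound
  have hmem : ∀ (α t : ℝ), t ∈ Icc (0:ℝ) T → ((α, t) : ℝ × ℝ) ∈ (univ ×ˢ Icc (0:ℝ) T : Set (ℝ × ℝ)) :=
    fun α t ht => ⟨mem_univ _, ht⟩
  have hA0 : 0 < A := by linarith
  have hda : ∀ t ∈ Icc (0:ℝ) T, ∀ α, HasDerivAt (fun a => D.z a t) (f' (α, t) (1, 0) + xvec) α := by
    intro t ht α
    have h1 : HasDerivAt (fun a : ℝ => ((a, t) : ℝ × ℝ)) (1, 0) α :=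
      (hasDerivAt_id α).prodMk (hasDerivAt_const α t)
    have h2 := (hd (α, t) (hmem α t ht)).comp_hasDerivWithinAt (s := univ) α h1.hasDerivWithinAt
      (fun a _ => hmem a t ht)
    have h3 := (h2.hasDerivAt univ_mem).add ((hasDerivAt_id α).smul_const xvec)
    have hfe : (fun a => D.z a t) = ((fun p : ℝ × ℝ => D.z p.1 p.2 - p.1 • xvec) ∘ fun a => (a, t)) +
        fun y => id y • xvec := by
      funext a; simp
    rw [hfe]
    rw [one_smul] at h3
    exact h3
  have hkin : ∀ t ∈ Icc (0:ℝ) T, ∀ α,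
      rinner (f' (α, t) (0, 1) - D.u1 (D.z α t) t) (perpv (f' (α, t) (1, 0) + xvec)) = 0 := by
    intro t ht α
    have hIoo : ∀ s ∈ Ioo (0:ℝ) T,
        rinner (f' (α, s) (0, 1) - D.u1 (D.z α s) s) (perpv (f' (α, s) (1, 0) + xvec)) = 0 := by
      intro s hs
      have hs' : s ∈ Icc (0:ℝ) T := ⟨hs.1.le, hs.2.le⟩
      have h1 : HasDerivAt (fun b : ℝ => ((α, b) : ℝ × ℝ)) (0, 1) s :=
        (hasDerivAt_const s α).prodMk (hasDerivAt_id s)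
      have h2 := (hd (α, s) (hmem α s hs')).comp_hasDerivWithinAt (s := Icc 0 T) s h1.hasDerivWithinAt
        (fun b hb => hmem α b hb)
      have h3 := (h2.hasDerivAt (Icc_mem_nhds hs.1 hs.2)).add_const (α • xvec)
      have h4 : HasDerivAt (fun b => D.z α b) (f' (α, s) (0, 1)) s := by
        have hfe : (fun b => D.z α b) = fun x => ((fun p : ℝ × ℝ => D.z p.1 p.2 - p.1 • xvec) ∘ Prod.mk α) x
            + α • xvec := by
          funext b; simp
        rw [hfe]
        exact h3
      have := D.hkin1 s hs' α
      rwa [h4.deriv, (hda s hs' α).deriv] at this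
    have hc1 : ContinuousOn (fun s : ℝ => f' (α, s)) (Icc 0 T) :=
      hcont.comp (by fun_prop) (fun s hs => hmem α s hs)
    have hc2 : ContinuousOn (fun s : ℝ => D.u1 (D.z α s) s) (Icc 0 T) :=
      D.hv1_smooth.continuousOn.comp (f := fun s : ℝ => ((α, s) : ℝ × ℝ)) (by fun_prop)
        (fun s hs => hmem α s hs)
    have hp : Continuous perpv := by
      unfold perpv
      fun_prop
    have hc : ContinuousOn (fun s : ℝ => rinner (f' (α, s) (0, 1) - D.u1 (D.z α s) s)
        (perpv (f' (α, s) (1, 0) + xvec))) (Icc 0 T) := by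
      unfold rinner
      refine ContinuousOn.inner (𝕜 := ℝ) ((hc1.clm_apply continuousOn_const).sub hc2) ?_
      exact hp.comp_continuousOn ((hc1.clm_apply continuousOn_const).add continuousOn_const)
    have hcl : Icc (0:ℝ) T ⊆ closure (Ioo 0 T) := by rw [closure_Ioo hT.ne]
    have heq : EqOn (fun s : ℝ => rinner (f' (α, s) (0, 1) - D.u1 (D.z α s) s)
        (perpv (f' (α, s) (1, 0) + xvec))) (fun _ => 0) (Icc 0 T) :=
      EqOn.of_subset_closure (fun s hs => hIoo s hs) hc continuousOn_const Ioo_subset_Icc_self hcl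
    exact heq ht
  have hlow : ∀ t ∈ Icc (0:ℝ) T, ∀ α, A⁻¹ ≤ ‖f' (α, t) (1, 0) + xvec‖ := by
    intro t ht α
    have := D.hz_lower t ht α
    rwa [(hda t ht α).deriv] at this
  refine ⟨fun α t => f' (α, t) (1, 0) + xvec, fun α t => f' (α, t) (0, 1), hda, ?_, hlow, ?_, ?_, ?_, ?_⟩
  · intro t ht
    have hc1 : Continuous (fun a : ℝ => f' (a, t)) :=
      hcont.comp_continuous (by fun_prop) (fun a => hmem a t ht)
    exact (hc1.clm_apply continuous_const).add continuous_const
  · intro t ht α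
    exact (hb (α, t) (hmem α t ht)).1
  · intro s hs t ht α β
    have h1 := hlip (α, t) (hmem α t ht) (β, s) (hmem β s hs)
    have h2 := prod_norm_le (β - α) (s - t)
    have h3 : D.z β s - D.z α t = (D.z β s - β • xvec - (D.z α t - α • xvec)) + (β - α) • xvec := by
      rw [sub_smul]; abel
    have h4 : ‖(β - α) • xvec‖ = |β - α| := by rw [norm_smul, xvec_norm, Real.norm_eq_abs, mul_one]
    rw [h3]
    refine (norm_add_le _ _).trans ?_
    rw [h4]
    simp only [Prod.mk_sub_mk] at h1
    have h5 := mul_le_mul_of_nonneg_left h2 hA0.le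
    have := abs_nonneg (s - t)
    linarith
  · intro s hs t ht α β
    have h1 := htay (α, t) (hmem α t ht) (β, s) (hmem β s hs)
    have h2 := prod_norm_le (β - α) (s - t)
    have h3 : f' (α, t) (β - α, s - t) = (β - α) • f' (α, t) (1, 0) + (s - t) • f' (α, t) (0, 1) := by
      rw [← map_smul, ← map_smul, ← map_add]
      simp
    simp only [Prod.mk_sub_mk] at h1
    rw [h3] at h1
    have h4 : D.z β s - D.z α t - (β - α) • (f' (α, t) (1, 0) + xvec) - (s - t) • f' (α, t) (0, 1) =
      D.z β s - β • xvec - (D.z α t - α • xvec) -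
        ((β - α) • f' (α, t) (1, 0) + (s - t) • f' (α, t) (0, 1)) := by
      rw [smul_add, sub_smul β α xvec]; abel
    rw [h4]
    refine h1.trans ?_
    gcongr
  · intro t ht α
    have hne : f' (α, t) (1, 0) + xvec ≠ 0 := by
      intro h0
      have := hlow t ht α
      rw [h0, norm_zero] at this
      have := inv_pos.2 hA0
      linarith
    obtain ⟨c, hc⟩ := perp_lin _ _ hne (hkin t ht α)
    have hn : ‖f' (α, t) (0, 1) - D.u1 (D.z α t) t‖ ≤ 2 * A := by
      have h1 : ‖f' (α, t) (0, 1)‖ ≤ A := by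
        refine ((f' (α, t)).le_opNorm _).trans ?_
        have := (hb (α, t) (hmem α t ht)).2
        simpa [Prod.norm_def] using this
      have h2 := (hVb (α, t) (hmem α t ht)).1
      refine (norm_sub_le _ _).trans ?_
      simp only at h2
      linarith
    refine ⟨-c, ?_, ?_⟩
    · rw [hc, norm_smul, Real.norm_eq_abs] at hn
      rw [abs_neg]
      have h1 : |c| * A⁻¹ ≤ 2 * A := (mul_le_mul_of_nonneg_left (hlow t ht α) (abs_nonneg c)).trans hn
      rw [← div_eq_mul_inv, div_le_iff₀ hA0] at h1
      nlinarith
    · rw [neg_smul, ← hc]; abel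


section
variable {ρ1 ρ2 σ grav T A : ℝ}

lemma per_int (D : TwoFluid ρ1 ρ2 σ grav T A) (t : ℝ) (ht : t ∈ Icc (0:ℝ) T) (n : ℤ) (α : ℝ) :
    D.z (α + n * (2 * Real.pi)) t = D.z α t + (n:ℝ) • transl := by
  induction n using Int.induction_on with
  | zero => simp
  | succ n ih =>
    have := D.hper_z t ht (α + (n:ℤ) * (2 * Real.pi))
    push_cast at *
    rw [show α + ((n:ℝ) + 1) * (2 * Real.pi) = α + n * (2 * Real.pi) + 2 * Real.pi by ring, this, ih,
      add_smul, one_smul, add_assoc]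
  | pred n ih =>
    have := D.hper_z t ht (α + (-(n:ℤ) - 1 : ℤ) * (2 * Real.pi))
    push_cast at *
    rw [show α + (-(n:ℝ) - 1) * (2 * Real.pi) + 2 * Real.pi = α + -n * (2 * Real.pi) by ring, ih] at this
    rw [sub_smul, one_smul, ← add_sub_assoc, this, add_sub_cancel_right]

lemma shift_ex (α : ℝ) : ∃ n : ℤ, α + n * (2 * Real.pi) ∈ Icc (0:ℝ) (2 * Real.pi) := by
  obtain ⟨n, hn, -⟩ := existsUnique_add_zsmul_mem_Ico Real.two_pi_pos α 0
  refine ⟨n, ?_⟩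
  simp only [zsmul_eq_mul, zero_add] at hn
  exact ⟨hn.1, hn.2.le⟩

lemma chord_loc (hT : 0 < T) (hA : 1 ≤ A) (D : TwoFluid ρ1 ρ2 σ grav T A) (t : ℝ)
    (ht : t ∈ Icc (0:ℝ) T) (α β : ℝ) (h : |α - β| ≤ (2 * A ^ 2)⁻¹) :
    |α - β| / (2 * A) ≤ ‖D.z α t - D.z β t‖ := by
  obtain ⟨dz, tz, -, -, hlow, -, -, htay, -⟩ := curve_facts hT hA D
  have hA0 : 0 < A := by linarith
  have h1 := htay t ht t ht β α
  simp only [sub_self, zero_smul, sub_zero, abs_zero, add_zero] at h1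
  have h2 := hlow t ht β
  have h3 : ‖(α - β) • dz β t‖ ≤ ‖D.z α t - D.z β t‖ + ‖D.z α t - D.z β t - (α - β) • dz β t‖ := by
    have := norm_sub_norm_le ((α - β) • dz β t) (D.z α t - D.z β t)
    rw [norm_sub_rev ((α - β) • dz β t)] at this
    linarith
  rw [norm_smul, Real.norm_eq_abs] at h3
  have h4 : |α - β| * A⁻¹ ≤ |α - β| * ‖dz β t‖ := mul_le_mul_of_nonneg_left h2 (abs_nonneg _)
  have h5 : A * |α - β| ^ 2 ≤ |α - β| / (2 * A) := by
    have : A * |α - β| ^ 2 ≤ A * |α - β| * (2 * A ^ 2)⁻¹ := by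
      rw [pow_two, ← mul_assoc]
      exact mul_le_mul_of_nonneg_left h (by positivity)
    refine this.trans (le_of_eq ?_)
    field_simp
  have h6 : |α - β| * A⁻¹ = |α - β| / (2 * A) + |α - β| / (2 * A) := by field_simp; ring
  linarith

lemma chord_far (hT : 0 < T) (hA : 1 ≤ A) (D : TwoFluid ρ1 ρ2 σ grav T A) (t : ℝ)
    (ht : t ∈ Icc (0:ℝ) T) (α β : ℝ) : |α - β| - 2 * A ≤ ‖D.z α t - D.z β t‖ := by
  obtain ⟨dz, tz, -, -, -, hb, -, -, -⟩ := curve_facts hT hA D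
  have h1 := hb t ht α
  have h2 := hb t ht β
  have h3 : (α - β) • xvec = (D.z α t - D.z β t) - (D.z α t - α • xvec) + (D.z β t - β • xvec) := by
    rw [sub_smul]; abel
  have h4 : ‖(α - β) • xvec‖ = |α - β| := by rw [norm_smul, xvec_norm, Real.norm_eq_abs, mul_one]
  rw [← h4, h3]
  have := norm_add_le ((D.z α t - D.z β t) - (D.z α t - α • xvec)) (D.z β t - β • xvec)
  have := norm_sub_le (D.z α t - D.z β t) (D.z α t - α • xvec)
  linarith

lemma z_cont (hT : 0 < T) (hA : 1 ≤ A) (D : TwoFluid ρ1 ρ2 σ grav T A) (t : ℝ)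
    (ht : t ∈ Icc (0:ℝ) T) : Continuous (fun α => D.z α t) := by
  obtain ⟨dz, tz, hd, -⟩ := curve_facts hT hA D
  exact continuous_iff_continuousAt.2 fun α => (hd t ht α).continuousAt

lemma not_mem_iff (D : TwoFluid ρ1 ρ2 σ grav T A) (t : ℝ) (ht : t ∈ Icc (0:ℝ) T) (x : E2) :
    x ∉ D.Ω2 t ↔ x ∈ closure (D.Ω1 t) := by
  constructor
  · intro hx
    have := D.hUnion t ht
    have hu : x ∈ D.Ω1 t ∪ D.Ω2 t ∪ range (fun α => D.z α t) := by rw [this]; trivial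
    rcases hu with (h | h) | h
    · exact subset_closure h
    · exact absurd h hx
    · rw [← D.hFront1 t ht] at h
      exact frontier_subset_closure h
  · intro hx hx2
    obtain ⟨y, hy1, hy2⟩ := mem_closure_iff.1 hx _ (D.hΩ2_open t ht) hx2
    exact (D.hDisj12 t ht).le_bot ⟨hy2, hy1⟩

lemma curve_inj (hT : 0 < T) (hA : 1 ≤ A) (D : TwoFluid ρ1 ρ2 σ grav T A) (t : ℝ)
    (ht : t ∈ Icc (0:ℝ) T) : Function.Injective (fun α => D.z α t) := by
  have hA0 : 0 < A := by linarith
  have hδ0 : 0 < (2 * A ^ 2)⁻¹ := by positivity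
  have hzc := z_cont hT hA D t ht
  set K : Set (ℝ × ℝ) := (Icc 0 (2 * Real.pi) ×ˢ Icc (2 * A ^ 2)⁻¹ (2 * A)) ∩
    {p | D.z p.1 t = D.z (p.1 + p.2) t} with hK
  have hKc : IsCompact K := by
    refine (isCompact_Icc.prod isCompact_Icc).inter_right ?_
    exact isClosed_eq (hzc.comp continuous_fst) (hzc.comp (continuous_fst.add continuous_snd))
  have hmk : ∀ s r : ℝ, s < r → D.z s t = D.z r t → ∃ p ∈ K, p.2 = r - s := by
    intro s r hsr hz
    obtain ⟨n, hn⟩ := shift_ex s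
    refine ⟨(s + n * (2 * Real.pi), r - s), ⟨⟨hn, ?_, ?_⟩, ?_⟩, rfl⟩
    · by_contra hcon
      push Not at hcon
      have := chord_loc hT hA D t ht r s (by rw [abs_of_pos (by linarith)]; exact hcon.le)
      rw [hz, sub_self, norm_zero, abs_of_pos (by linarith)] at this
      have h2 : 0 < (r - s) / (2 * A) := by apply div_pos <;> linarith
      linarith
    · have := chord_far hT hA D t ht r s
      rw [hz, sub_self, norm_zero, abs_of_pos (by linarith)] at this
      show r - s ≤ 2 * A
      linarith
    · show D.z (s + n * (2 * Real.pi)) t = D.z (s + n * (2 * Real.pi) + (r - s)) t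
      rw [show s + n * (2 * Real.pi) + (r - s) = r + n * (2 * Real.pi) by ring, per_int D t ht,
        per_int D t ht, hz]
  have hKe : ¬ K.Nonempty := by
    intro hne
    obtain ⟨⟨α, d⟩, hpK, hmin⟩ := hKc.exists_isMinOn hne continuous_snd.continuousOn
    have hd0 : 0 < d := lt_of_lt_of_le hδ0 hpK.1.2.1
    obtain ⟨dz, tz, hdz, hdc, hlow, -⟩ := curve_facts hT hA D
    obtain ⟨a, ha1, ha⟩ := D.hStrip
    have himg : ∀ U : Set E2, ce ⁻¹' U = ce.symm '' U := by
      intro U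
      ext w
      constructor
      · intro h
        exact ⟨ce w, h, by simp⟩
      · rintro ⟨x, hx, rfl⟩
        simpa using hx
    have hΓ : (D.Ω1 t ∪ D.Ω2 t)ᶜ ⊆ frontier (D.Ω1 t) := by
      intro x hx
      rw [D.hFront1 t ht]
      have hu : x ∈ D.Ω1 t ∪ D.Ω2 t ∪ range (fun α => D.z α t) := by rw [D.hUnion t ht]; trivial
      rcases hu with h | h
      · exact absurd h hx
      · exact h
    have hdense : Dense (D.Ω1 t ∪ D.Ω2 t) := by
      rw [← compl_compl (D.Ω1 t ∪ D.Ω2 t), ← interior_eq_empty_iff_dense_compl]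
      refine subset_empty_iff.1 ((interior_mono hΓ).trans ?_)
      rw [← frontier_compl, interior_frontier (D.hΩ1_open t ht).isClosed_compl]
    refine loop_contra (fun τ => ce.symm (D.z τ t)) (fun τ => ce.symm (dz τ t)) ?_ ?_ ?_ α (α + d)
      (by linarith) ?_ ?_ (ce ⁻¹' D.Ω1 t) (ce ⁻¹' D.Ω2 t) ((D.hΩ1_open t ht).preimage ce.continuous)
      ((D.hΩ2_open t ht).preimage ce.continuous) ?_ ?_ ?_ ?_ ?_ ?_ ?_
    · intro τ
      exact (ce.symm.toContinuousLinearEquiv : E2 →L[ℝ] ℂ).hasFDerivAt.comp_hasDerivAt τ (hdz t ht τ)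
    · exact ce.symm.continuous.comp (hdc t ht)
    · intro τ h0
      have h1 := hlow t ht τ
      have h2 : dz τ t = 0 := by simpa using h0
      rw [h2, norm_zero] at h1
      have := inv_pos.2 hA0
      linarith
    · show ce.symm (D.z α t) = ce.symm (D.z (α + d) t)
      rw [show D.z α t = D.z (α + d) t from hpK.2]
    · intro s hs r hr hsr hz
      have hz' : D.z s t = D.z r t := ce.symm.injective hz
      obtain ⟨p, hp, hpd⟩ := hmk s r hsr hz'
      have h1 : d ≤ p.2 := hmin hp
      rw [hpd] at h1
      exact ⟨by linarith [hs.1, hr.2], by linarith [hs.1, hr.2]⟩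
    · rw [himg]
      exact (D.hΩ1_conn t ht).isPreconnected.image _ ce.symm.continuous.continuousOn
    · rw [himg]
      exact (D.hΩ2_conn t ht).isPreconnected.image _ ce.symm.continuous.continuousOn
    · intro τ h
      simp only [mem_preimage, LinearIsometryEquiv.apply_symm_apply] at h
      exact (D.hDisj1Γ t ht).le_bot ⟨h, τ, rfl⟩
    · intro τ h
      simp only [mem_preimage, LinearIsometryEquiv.apply_symm_apply] at h
      exact (D.hDisj2Γ t ht).le_bot ⟨h, τ, rfl⟩
    · rw [← preimage_union]
      exact hdense.preimage ce.toHomeomorph.isOpenMap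
    · intro R
      refine ⟨⟨0, -(|R| + a + 1)⟩, (ha t ht).1 ?_, ?_⟩
      · show (ce _) 1 ≤ -a
        rw [ce_one]
        simp only
        linarith [abs_nonneg R]
      · have := Complex.abs_im_le_norm ⟨0, -(|R| + a + 1)⟩
        simp only [abs_neg] at this
        have h2 := le_abs_self (|R| + a + 1)
        have h3 := le_abs_self R
        linarith
    · intro R
      refine ⟨⟨0, (|R| + a + 1)⟩, (ha t ht).2 ?_, ?_⟩
      · show a ≤ (ce _) 1
        rw [ce_one]
        simp only
        linarith [abs_nonneg R]
      · have := Complex.abs_im_le_norm ⟨0, (|R| + a + 1)⟩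
        simp only at this
        have h2 := le_abs_self (|R| + a + 1)
        have h3 := le_abs_self R
        linarith
  intro s r hz
  rcases lt_trichotomy s r with h | h | h
  · obtain ⟨p, hp, -⟩ := hmk s r h hz
    exact absurd ⟨p, hp⟩ hKe
  · exact h
  · obtain ⟨p, hp, -⟩ := hmk r s h hz.symm
    exact absurd ⟨p, hp⟩ hKe

end


section
variable {ρ1 ρ2 σ grav T A : ℝ}

lemma u_lip (hT : 0 < T) (hA : 1 ≤ A) (D : TwoFluid ρ1 ρ2 σ grav T A) (t : ℝ)
    (ht : t ∈ Icc (0:ℝ) T) (x y : E2) (hseg : segment ℝ x y ⊆ closure (D.Ω1 t)) :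
    ‖D.u1 x t - D.u1 y t‖ ≤ A ^ 2 * ‖x - y‖ := by
  have hA0 : 0 < A := by linarith
  obtain ⟨dz, tz, hdz, hdc, hlow, -⟩ := curve_facts hT hA D
  obtain ⟨V', hVd, hVb, hVcont, -, -⟩ := slab_facts T A hT _ 3 (by norm_num) D.hv1_smooth D.hv1_bound
  obtain ⟨G, hGc, hGu, hGd⟩ := ext_deriv (D.Ω1 t) (D.hΩ1_open t ht) _ (D.hu1_reg t ht)
  obtain ⟨a, ha1, ha⟩ := D.hStrip
  have hzcl : ∀ α, D.z α t ∈ closure (D.Ω1 t) := by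
    intro α
    apply frontier_subset_closure
    rw [D.hFront1 t ht]
    exact ⟨α, rfl⟩
  have hbound := grad_bound (D.Ω1 t) (D.hΩ1_open t ht) (D.hΩ1_conn t ht).isPreconnected _ G hGc hGu hGd
    (D.hdiv1 t ht) (D.hcurl1 t ht) a (ha t ht).1 (by
      intro x hx
      by_contra hcon
      push Not at hcon
      exact (not_mem_iff D t ht x).2 hx ((ha t ht).2 hcon.le))
    (D.hper_Ω1 t ht) (D.hper_u1 t ht) (D.hL2_1 t ht) (by
      rw [D.hFront1 t ht]; exact ⟨_, 0, rfl⟩) (A ^ 2) (by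
      intro x hx
      rw [D.hFront1 t ht] at hx
      obtain ⟨α, rfl⟩ := hx
      have hne : dz α t ≠ 0 := by
        intro h0
        have h1 := hlow t ht α
        rw [h0, norm_zero] at h1
        have := inv_pos.2 hA0
        linarith
      refine ⟨dz α t, hne, ?_⟩
      have hd1 : HasDerivAt (fun b => D.u1 (D.z b t) t) (G (D.z α t) (dz α t)) α := by
        have := (hGd (D.z α t) (hzcl α)).comp_hasDerivWithinAt (s := univ) α
          (hdz t ht α).hasDerivWithinAt (fun b _ => hzcl b)
        exact this.hasDerivAt univ_mem
      have hmem : ∀ b : ℝ, ((b, t) : ℝ × ℝ) ∈ (univ ×ˢ Icc (0:ℝ) T : Set (ℝ × ℝ)) :=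
        fun b => ⟨mem_univ _, ht⟩
      have hd2 : HasDerivAt (fun b => D.u1 (D.z b t) t) (V' (α, t) (1, 0)) α := by
        have h1 : HasDerivAt (fun a : ℝ => ((a, t) : ℝ × ℝ)) (1, 0) α :=
          (hasDerivAt_id α).prodMk (hasDerivAt_const α t)
        have h2 := (hVd (α, t) (hmem α)).comp_hasDerivWithinAt (s := univ) α h1.hasDerivWithinAt
          (fun b _ => hmem b)
        exact h2.hasDerivAt univ_mem
      show ‖G (D.z α t) (dz α t)‖ ≤ _
      rw [hd1.unique hd2]
      have h1 : ‖V' (α, t) (1, 0)‖ ≤ A := by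
        refine ((V' (α, t)).le_opNorm _).trans ?_
        have := (hVb (α, t) (hmem α)).2
        simpa [Prod.norm_def] using this
      have h2 : A ^ 2 * A⁻¹ ≤ A ^ 2 * ‖dz α t‖ := mul_le_mul_of_nonneg_left (hlow t ht α) (by positivity)
      have h3 : A ^ 2 * A⁻¹ = A := by field_simp
      linarith)
  have := (convex_segment (𝕜 := ℝ) x y).norm_image_sub_le_of_norm_hasFDerivWithin_le
    (f := fun x => D.u1 x t) (f' := G) (C := A ^ 2)
    (fun w hw => (hGd w (hseg hw)).mono hseg) (fun w hw => hbound w (hseg hw))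
    (right_mem_segment ℝ x y) (left_mem_segment ℝ x y)
  exact this

/-- A preconnected set avoiding the curve and meeting `Ω1` lies in `Ω1`. -/
lemma conn_sub1 (D : TwoFluid ρ1 ρ2 σ grav T A) (t : ℝ) (ht : t ∈ Icc (0:ℝ) T) (C : Set E2)
    (hC : IsPreconnected C) (hav : ∀ α, D.z α t ∉ C) (hm : (C ∩ D.Ω1 t).Nonempty) : C ⊆ D.Ω1 t := by
  refine hC.subset_left_of_subset_union (D.hΩ1_open t ht) (D.hΩ2_open t ht) (D.hDisj12 t ht) ?_ hm
  intro x hx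
  have hu : x ∈ D.Ω1 t ∪ D.Ω2 t ∪ range (fun α => D.z α t) := by rw [D.hUnion t ht]; trivial
  rcases hu with h | ⟨α, rfl⟩
  · exact h
  · exact absurd hx (hav α)

lemma conn_sub2 (D : TwoFluid ρ1 ρ2 σ grav T A) (t : ℝ) (ht : t ∈ Icc (0:ℝ) T) (C : Set E2)
    (hC : IsPreconnected C) (hav : ∀ α, D.z α t ∉ C) (hm : (C ∩ D.Ω2 t).Nonempty) : C ⊆ D.Ω2 t := by
  refine hC.subset_left_of_subset_union (D.hΩ2_open t ht) (D.hΩ1_open t ht) (D.hDisj12 t ht).symm ?_ hm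
  intro x hx
  have hu : x ∈ D.Ω1 t ∪ D.Ω2 t ∪ range (fun α => D.z α t) := by rw [D.hUnion t ht]; trivial
  rcases hu with (h | h) | ⟨α, rfl⟩
  · exact Or.inr h
  · exact Or.inl h
  · exact absurd hx (hav α)

/-- generic spacetime openness -/
lemma open_gen (O : Set E2) (hO : IsOpen O) (hOc : IsConnected O) (H : Set E2) (w : E2) (hw : w ∈ H)
    (hHO : H ⊆ O) (x0 : E2) (hx0 : x0 ∈ O) : ∃ r > 0, ∃ C : Set E2, IsPreconnected C ∧ w ∈ C ∧
      Metric.ball x0 r ⊆ C ∧ ∀ x ∈ C, Metric.ball x r ⊆ O := by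
  have hpc : IsPathConnected O := hO.isConnected_iff_isPathConnected.1 hOc
  obtain ⟨γ, hγ⟩ := hpc.joinedIn x0 hx0 w (hHO hw)
  have hcomp : IsCompact (range γ) := isCompact_range γ.continuous
  obtain ⟨r, hr, hsub⟩ := hcomp.exists_thickening_subset_open hO (by rintro _ ⟨s, rfl⟩; exact hγ s)
  refine ⟨r / 2, by linarith, range γ ∪ Metric.ball x0 (r / 2), ?_, Or.inl ⟨1, γ.target⟩,
    subset_union_right, ?_⟩
  · refine IsPreconnected.union x0 ⟨0, γ.source⟩ (Metric.mem_ball_self (by linarith)) ?_ ?_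
    · exact isPreconnected_range γ.continuous
    · exact (convex_ball _ _).isPreconnected
  · rintro x hx y hy
    apply hsub
    rw [Metric.mem_thickening_iff]
    rcases hx with hx | hx
    · exact ⟨x, hx, by rw [Metric.mem_ball] at hy; linarith⟩
    · refine ⟨x0, ⟨0, γ.source⟩, ?_⟩
      rw [Metric.mem_ball] at hx hy
      linarith [dist_triangle y x x0]

lemma open1 (hT : 0 < T) (hA : 1 ≤ A) (D : TwoFluid ρ1 ρ2 σ grav T A) (t : ℝ) (ht : t ∈ Icc (0:ℝ) T)
    (x0 : E2) (hx0 : x0 ∈ D.Ω1 t) : ∃ r > 0, ∀ s ∈ Icc (0:ℝ) T, |s - t| < r → ∀ x, dist x x0 < r →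
      x ∈ D.Ω1 s := by
  obtain ⟨dz, tz, -, -, -, -, hlip, -⟩ := curve_facts hT hA D
  obtain ⟨a, ha1, ha⟩ := D.hStrip
  obtain ⟨r, hr, C, hC, hwC, hbC, hCO⟩ := open_gen (D.Ω1 t) (D.hΩ1_open t ht) (D.hΩ1_conn t ht)
    {x : E2 | x 1 ≤ -a} (EuclideanSpace.single 1 (-a)) (by simp) (ha t ht).1 x0 hx0
  refine ⟨min r (r / (A + 1)), by positivity, ?_⟩
  intro s hs hst x hx
  have h1 : |s - t| < r / (A + 1) := hst.trans_le (min_le_right _ _)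
  refine conn_sub1 D s hs C hC ?_ ⟨_, hwC, (ha s hs).1 (by simp)⟩ (hbC (hx.trans_le (min_le_left _ _)))
  intro α hα
  have h2 := hlip s hs t ht α α
  rw [sub_self, abs_zero, zero_add] at h2
  rw [lt_div_iff₀ (by linarith)] at h1
  have h3 : D.z α t ∈ D.Ω1 t := hCO _ hα (by
    rw [Metric.mem_ball, dist_comm, dist_eq_norm]
    linarith)
  exact (D.hDisj1Γ t ht).le_bot ⟨h3, α, rfl⟩

lemma open2 (hT : 0 < T) (hA : 1 ≤ A) (D : TwoFluid ρ1 ρ2 σ grav T A) (t : ℝ) (ht : t ∈ Icc (0:ℝ) T)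
    (x0 : E2) (hx0 : x0 ∈ D.Ω2 t) : ∃ r > 0, ∀ s ∈ Icc (0:ℝ) T, |s - t| < r → ∀ x, dist x x0 < r →
      x ∈ D.Ω2 s := by
  obtain ⟨dz, tz, -, -, -, -, hlip, -⟩ := curve_facts hT hA D
  obtain ⟨a, ha1, ha⟩ := D.hStrip
  obtain ⟨r, hr, C, hC, hwC, hbC, hCO⟩ := open_gen (D.Ω2 t) (D.hΩ2_open t ht) (D.hΩ2_conn t ht)
    {x : E2 | a ≤ x 1} (EuclideanSpace.single 1 a) (by simp) (ha t ht).2 x0 hx0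
  refine ⟨min r (r / (A + 1)), by positivity, ?_⟩
  intro s hs hst x hx
  have h1 : |s - t| < r / (A + 1) := hst.trans_le (min_le_right _ _)
  refine conn_sub2 D s hs C hC ?_ ⟨_, hwC, (ha s hs).2 (by simp)⟩ (hbC (hx.trans_le (min_le_left _ _)))
  intro α hα
  have h2 := hlip s hs t ht α α
  rw [sub_self, abs_zero, zero_add] at h2
  rw [lt_div_iff₀ (by linarith)] at h1
  have h3 : D.z α t ∈ D.Ω2 t := hCO _ hα (by
    rw [Metric.mem_ball, dist_comm, dist_eq_norm]
    linarith)
  exact (D.hDisj2Γ t ht).le_bot ⟨h3, α, rfl⟩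

end


section
variable {ρ1 ρ2 σ grav T A : ℝ}

/-- the weight -/
def phi (d : ℝ) : ℝ := d / (1 + d)

lemma phi_pos {d : ℝ} (hd : 0 < d) : 0 < phi d := by unfold phi; positivity
lemma phi_le {d : ℝ} (hd : 0 ≤ d) : phi d ≤ d := by
  unfold phi
  exact div_le_self hd (by linarith)
lemma phi_lt_one {d : ℝ} (hd : 0 ≤ d) : phi d < 1 := by
  unfold phi
  rw [div_lt_one (by linarith)]; linarith
lemma phi_mono {a b : ℝ} (ha : 0 ≤ a) (hab : a ≤ b) : phi a ≤ phi b := by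
  unfold phi
  rw [div_le_div_iff₀ (by linarith) (by linarith)]
  nlinarith
lemma phi_lip {a b c : ℝ} (ha : 0 ≤ a) (hb : 0 ≤ b) (hc : 0 ≤ c) (h : a - c ≤ b) :
    phi a - c ≤ phi b := by
  rcases le_total a b with hab | hab
  · linarith [phi_mono ha hab]
  · have h1 : phi a - phi b = (a - b) / ((1 + a) * (1 + b)) := by
      unfold phi
      field_simp
      ring
    have h2 : (a - b) / ((1 + a) * (1 + b)) ≤ a - b :=
      div_le_self (by linarith) (by nlinarith)
    linarith
lemma phi_sub {a b c : ℝ} (ha : 0 < a) (hb : 0 < b) (hc0 : 0 ≤ c) (hc : c ≤ a + b) :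
    phi c < phi a + phi b := by
  refine (phi_mono hc0 hc).trans_lt ?_
  unfold phi
  rw [div_add_div _ _ (by positivity) (by positivity), div_lt_div_iff₀ (by positivity) (by positivity)]
  have := mul_pos ha hb
  nlinarith [mul_pos this ha, mul_pos this hb]

lemma hits (hT : 0 < T) (hA : 1 ≤ A) (D : TwoFluid ρ1 ρ2 σ grav T A) (t : ℝ) (ht : t ∈ Icc (0:ℝ) T)
    (α β : ℝ) (hop : ∀ l ∈ Ioo (0:ℝ) 1, D.z α t + l • (D.z β t - D.z α t) ∈ D.Ω1 t)
    (η : ℝ) (hη : 0 < η) : ∃ m > 0, ∀ a l : ℝ, l ∈ Icc (0:ℝ) 1 →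
      ‖D.z a t - (D.z α t + l • (D.z β t - D.z α t))‖ < m →
      (|a - α| < η ∧ l < 1/4) ∨ (|a - β| < η ∧ 3/4 < l) := by
  have hzc := z_cont hT hA D t ht
  set L := ‖D.z β t - D.z α t‖ with hL
  set M := L + 2 * A + 1 with hM
  set g : ℝ × ℝ → ℝ := fun p => ‖D.z p.1 t - (D.z α t + p.2 • (D.z β t - D.z α t))‖ with hg
  have hgc : Continuous g := by
    have h1 : Continuous fun p : ℝ × ℝ => D.z p.1 t := hzc.comp continuous_fst
    exact (h1.sub (continuous_const.add (continuous_snd.smul continuous_const))).norm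
  set G : Set (ℝ × ℝ) := {p | (|p.1 - α| < η ∧ p.2 < 1/4) ∨ (|p.1 - β| < η ∧ 3/4 < p.2)} with hG
  have hGo : IsOpen G := by
    have e1 : Continuous fun p : ℝ × ℝ => |p.1 - α| := by fun_prop
    have e2 : Continuous fun p : ℝ × ℝ => |p.1 - β| := by fun_prop
    exact ((isOpen_lt e1 continuous_const).inter (isOpen_lt continuous_snd continuous_const)).union
      ((isOpen_lt e2 continuous_const).inter (isOpen_lt continuous_const continuous_snd))
  set B : Set (ℝ × ℝ) := (Icc (α - M) (α + M) ×ˢ Icc 0 1) ∩ Gᶜ with hB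
  have hBc : IsCompact B := (isCompact_Icc.prod isCompact_Icc).inter_right hGo.isClosed_compl
  have hpos : ∀ p ∈ B, 0 < g p := by
    rintro ⟨a, l⟩ ⟨⟨-, hl⟩, hpG⟩
    refine norm_pos_iff.2 fun h0 => ?_
    have hz : D.z a t = D.z α t + l • (D.z β t - D.z α t) := sub_eq_zero.1 h0
    simp only [mem_Icc] at hl
    rcases hl.1.eq_or_lt with h | h
    · rw [← h, zero_smul, add_zero] at hz
      have : a = α := curve_inj hT hA D t ht hz
      exact hpG (Or.inl ⟨by simp [this, hη], by simp [← h]⟩)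
    · rcases hl.2.eq_or_lt with h' | h'
      · rw [h', one_smul, add_sub_cancel] at hz
        have : a = β := curve_inj hT hA D t ht hz
        exact hpG (Or.inr ⟨by simp [this, hη], by simp [h']; norm_num⟩)
      · have := hop l ⟨h, h'⟩
        rw [← hz] at this
        exact (D.hDisj1Γ t ht).le_bot ⟨this, a, rfl⟩
  obtain ⟨m, hm, hmB⟩ : ∃ m > 0, ∀ p ∈ B, m ≤ g p := by
    rcases B.eq_empty_or_nonempty with h | h
    · exact ⟨1, one_pos, by simp [h]⟩
    · obtain ⟨p, hp, hmin⟩ := hBc.exists_isMinOn h hgc.continuousOn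
      exact ⟨g p, hpos p hp, fun q hq => hmin hq⟩
  refine ⟨min m 1, by positivity, ?_⟩
  intro a l hl hlt
  by_contra hcon
  have hlt1 := hlt.trans_le (min_le_left _ _)
  have hlt2 := hlt.trans_le (min_le_right _ _)
  by_cases haM : a ∈ Icc (α - M) (α + M)
  · have := hmB (a, l) ⟨⟨haM, hl⟩, hcon⟩
    exact absurd hlt1 (not_lt.2 this)
  · have h1 : M < |a - α| := by
      by_contra h
      push Not at h
      rw [abs_le] at h
      exact haM ⟨by linarith, by linarith⟩
    have h2 := chord_far hT hA D t ht a α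
    have h3 : ‖D.z a t - D.z α t‖ ≤ ‖D.z a t - (D.z α t + l • (D.z β t - D.z α t))‖ +
        ‖l • (D.z β t - D.z α t)‖ := by
      have := norm_add_le (D.z a t - (D.z α t + l • (D.z β t - D.z α t))) (l • (D.z β t - D.z α t))
      refine le_trans (le_of_eq ?_) this
      congr 1
      abel
    have h4 : ‖l • (D.z β t - D.z α t)‖ ≤ L := by
      rw [norm_smul, Real.norm_eq_abs, abs_of_nonneg hl.1]
      exact mul_le_of_le_one_left (norm_nonneg _) hl.2
    linarith

lemma geo (hT : 0 < T) (hA : 1 ≤ A) (D : TwoFluid ρ1 ρ2 σ grav T A) (s : ℝ) (hs : s ∈ Icc (0:ℝ) T)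
    (a b η : ℝ) (hη : η ≤ (2 * A ^ 2)⁻¹)
    (hmid : D.z a s + (1/2 : ℝ) • (D.z b s - D.z a s) ∈ D.Ω1 s)
    (hh : ∀ e l : ℝ, l ∈ Icc (0:ℝ) 1 → D.z e s = D.z a s + l • (D.z b s - D.z a s) →
      (|e - a| ≤ η ∧ l < 1/4) ∨ (|e - b| ≤ η ∧ 3/4 < l)) :
    ∃ a' b' μ : ℝ, 0 ≤ μ ∧ |a' - a| ≤ η ∧ |b' - b| ≤ η ∧
      |a' - a| + |b' - b| ≤ 2 * A * (μ * ‖D.z a s - D.z b s‖) ∧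
      ‖D.z a' s - D.z b' s‖ = (1 - μ) * ‖D.z a s - D.z b s‖ ∧
      segment ℝ (D.z a' s) (D.z b' s) ⊆ closure (D.Ω1 s) := by
  have hA0 : 0 < A := by linarith
  set w : ℝ → E2 := fun l => D.z a s + l • (D.z b s - D.z a s) with hw
  have hwc : Continuous w := by fun_prop
  have hΓ : IsClosed (range fun α => D.z α s) := by
    rw [← D.hFront1 s hs]; exact isClosed_frontier
  have hHc : IsClosed (w ⁻¹' (range fun α => D.z α s)) := hΓ.preimage hwc
  obtain ⟨l1, ⟨hl1I, a', ha'⟩, hl1max⟩ := (isCompact_Icc (a := (0:ℝ)) (b := 1/2)).inter_right hHc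
    |>.exists_isGreatest ⟨0, ⟨le_rfl, by norm_num⟩, a, by simp [hw]⟩
  obtain ⟨l2, ⟨hl2I, b', hb'⟩, hl2min⟩ := (isCompact_Icc (a := (1/2:ℝ)) (b := 1)).inter_right hHc
    |>.exists_isLeast ⟨1, ⟨by norm_num, le_rfl⟩, b, by simp [hw]⟩
  simp only at ha' hb'
  have hnhit : ∀ l ∈ Ioo l1 l2, ∀ α, D.z α s ≠ w l := by
    intro l hl α hα
    rcases le_total l (1/2) with h | h
    · have : l ≤ l1 := hl1max ⟨⟨by linarith [hl1I.1, hl.1], h⟩, α, hα⟩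
      linarith [hl.1]
    · have : l2 ≤ l := hl2min ⟨⟨h, by linarith [hl2I.2, hl.2]⟩, α, hα⟩
      linarith [hl.2]
  obtain ⟨h1a, h1l⟩ : |a' - a| ≤ η ∧ l1 < 1/4 := by
    rcases hh a' l1 ⟨hl1I.1, by linarith [hl1I.2]⟩ ha' with h | h
    · exact h
    · linarith [hl1I.2, h.2]
  obtain ⟨h2b, h2l⟩ : |b' - b| ≤ η ∧ 3/4 < l2 := by
    rcases hh b' l2 ⟨by linarith [hl2I.1], hl2I.2⟩ hb' with h | h
    · linarith [hl2I.1, h.2]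
    · exact h
  have hsub : w '' Ioo l1 l2 ⊆ D.Ω1 s := by
    refine conn_sub1 D s hs _ (isPreconnected_Ioo.image w hwc.continuousOn) ?_ ?_
    · rintro α ⟨l, hl, h⟩
      exact hnhit l hl α h.symm
    · exact ⟨w (1/2), ⟨1/2, ⟨by linarith, by linarith⟩, rfl⟩, hmid⟩
  have hsub2 : w '' Icc l1 l2 ⊆ closure (D.Ω1 s) := by
    rw [← closure_Ioo (show l1 ≠ l2 by linarith)]
    exact (image_closure_subset_closure_image hwc).trans (closure_mono hsub)
  set n := ‖D.z a s - D.z b s‖ with hn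
  have hnn : 0 ≤ n := norm_nonneg _
  have e1 : ‖D.z a' s - D.z a s‖ = l1 * n := by
    rw [ha', hw]
    simp only [add_sub_cancel_left, norm_smul, Real.norm_eq_abs, abs_of_nonneg hl1I.1]
    rw [norm_sub_rev]
  have e2 : ‖D.z b' s - D.z b s‖ = (1 - l2) * n := by
    have : D.z b' s - D.z b s = (1 - l2) • (D.z a s - D.z b s) := by
      rw [hb', hw]
      module
    rw [this, norm_smul, Real.norm_eq_abs, abs_of_nonneg (by linarith [hl2I.2])]
  have c1 := chord_loc hT hA D s hs a' a (h1a.trans hη)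
  have c2 := chord_loc hT hA D s hs b' b (h2b.trans hη)
  rw [e1, div_le_iff₀ (by positivity)] at c1
  rw [e2, div_le_iff₀ (by positivity)] at c2
  refine ⟨a', b', l1 + (1 - l2), by linarith [hl1I.1, hl2I.2], h1a, h2b, by nlinarith, ?_, ?_⟩
  · have : D.z a' s - D.z b' s = (l2 - l1) • (D.z a s - D.z b s) := by
      rw [ha', hb', hw]
      module
    rw [this, norm_smul, Real.norm_eq_abs, abs_of_nonneg (by linarith)]
    ring
  · rw [segment_eq_image']
    rintro _ ⟨θ, hθ, rfl⟩
    apply hsub2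
    refine ⟨l1 + θ * (l2 - l1), ⟨?_, ?_⟩, ?_⟩
    · have := mul_nonneg hθ.1 (show 0 ≤ l2 - l1 by linarith)
      linarith
    · have := mul_le_of_le_one_left (show 0 ≤ l2 - l1 by linarith) hθ.2
      linarith
    · simp only
      rw [ha', hb', hw]
      module

end


section
variable {ρ1 ρ2 σ grav T A : ℝ}

lemma ev_small (c x : ℝ) (hx : 0 < x) : ∀ᶠ h in nhdsWithin (0:ℝ) (Ioi 0), c * h < x := by
  have h1 : Tendsto (fun h : ℝ => c * h) (nhdsWithin (0:ℝ) (Ioi 0)) (nhds (c * 0)) :=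
    ((continuous_const.mul continuous_id).tendsto 0).mono_left nhdsWithin_le_nhds
  rw [mul_zero] at h1
  exact h1.eventually_lt_const hx

lemma back (hT : 0 < T) (hA : 1 ≤ A) (D : TwoFluid ρ1 ρ2 σ grav T A) (t : ℝ) (ht : t ∈ Icc (0:ℝ) T)
    (α : ℝ) : ∃ c : ℝ, |c| ≤ 2 * A ^ 2 ∧ ∀ h, 0 ≤ h → h ≤ t →
      ‖D.z (α - h * c) (t - h) - D.z α t + h • D.u1 (D.z α t) t‖ ≤ A * (2 * A ^ 2 + 1) ^ 2 * h ^ 2 ∧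
      ‖D.z (α - h * c) (t - h) - D.z α t‖ ≤ (A + 1) * (2 * A ^ 2 + 1) * h := by
  have hA0 : 0 < A := by linarith
  obtain ⟨dz, tz, -, -, -, -, hlip, htay, hkin⟩ := curve_facts hT hA D
  obtain ⟨c, hc, hcv⟩ := hkin t ht α
  refine ⟨c, hc, ?_⟩
  intro h h0 hht
  have hs : t - h ∈ Icc (0:ℝ) T := ⟨by linarith, by linarith [ht.2]⟩
  have e1 := htay _ hs t ht α (α - h * c)
  have e2 := hlip _ hs t ht α (α - h * c)
  have e3 : |α - h * c - α| + |t - h - t| ≤ (2 * A ^ 2 + 1) * h := by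
    have f1 : α - h * c - α = -(h * c) := by ring
    have f2 : t - h - t = -h := by ring
    rw [f1, f2, abs_neg, abs_neg, abs_mul, abs_of_nonneg h0]
    have := mul_le_mul_of_nonneg_left hc h0
    linarith
  constructor
  · have e4 : D.z (α - h * c) (t - h) - D.z α t - (α - h * c - α) • dz α t - (t - h - t) • tz α t
        = D.z (α - h * c) (t - h) - D.z α t + h • D.u1 (D.z α t) t := by
      rw [sub_eq_iff_eq_add.1 hcv]
      module
    rw [e4] at e1
    refine e1.trans ?_
    rw [mul_assoc, ← mul_pow]
    have : 0 ≤ |α - h * c - α| + |t - h - t| := by positivity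
    gcongr
  · refine e2.trans ?_
    rw [mul_assoc]
    gcongr

def Cst (A : ℝ) : ℝ := 4 * A ^ 2 * (2 * A ^ 2 + 1) + A ^ 2 + 1

set_option maxHeartbeats 2000000 in
lemma step (hT : 0 < T) (hA : 1 ≤ A) (D : TwoFluid ρ1 ρ2 σ grav T A) (t : ℝ) (ht : t ∈ Icc (0:ℝ) T)
    (ht0 : 0 < t) (α β : ℝ) (hne : α ≠ β)
    (hop : ∀ l ∈ Ioo (0:ℝ) 1, D.z α t + l • (D.z β t - D.z α t) ∈ D.Ω1 t)
    (hadm : segment ℝ (D.z α t) (D.z β t) ⊆ closure (D.Ω1 t)) (q : ℝ) (hq0 : 0 < q)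
    (hq : q ≤ 1 / (4 * A)) (hl : ‖D.z α t - D.z β t‖ ≤ q * phi |α - β|) :
    ∃ h, 0 < h ∧ h ≤ t ∧ ∃ a' b' : ℝ, a' ≠ b' ∧
      segment ℝ (D.z a' (t - h)) (D.z b' (t - h)) ⊆ closure (D.Ω1 (t - h)) ∧
      ∀ q', q * (1 + Cst A * h) ≤ q' → q' ≤ 1 / (2 * A) →
        ‖D.z a' (t - h) - D.z b' (t - h)‖ ≤ q' * phi |a' - b'| := by
  have hA0 : 0 < A := by linarith
  set δ0 : ℝ := (2 * A ^ 2)⁻¹ with hδ0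
  have hδ0p : 0 < δ0 := by positivity
  set d := |α - β| with hd
  have hd0 : 0 < d := abs_pos.2 (sub_ne_zero.2 hne)
  have hphid : 0 < phi d := phi_pos hd0
  have hdδ : δ0 < d := by
    by_contra hcon
    push Not at hcon
    have h1 := chord_loc hT hA D t ht α β hcon
    have h2 : q * phi d ≤ 1 / (4 * A) * d := mul_le_mul hq (phi_le hd0.le) hphid.le (by positivity)
    have h3 : 1 / (4 * A) * d < d / (2 * A) := by
      rw [one_div, inv_mul_eq_div]
      exact div_lt_div_of_pos_left hd0 (by positivity) (by linarith)
    linarith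
  have hphi0 : 1 ≤ phi d * (2 * A ^ 2 + 1) := by
    have h1 : phi δ0 = 1 / (2 * A ^ 2 + 1) := by
      unfold phi
      rw [hδ0]
      field_simp
      try ring
    have h2 := phi_mono hδ0p.le hdδ.le
    rw [h1, div_le_iff₀ (by positivity)] at h2
    exact h2
  obtain ⟨c1, hc1, hb1⟩ := back hT hA D t ht α
  obtain ⟨c2, hc2, hb2⟩ := back hT hA D t ht β
  obtain ⟨m, hm, hhit⟩ := hits hT hA D t ht α β hop (δ0 / 8) (by linarith)
  obtain ⟨r, hr, hopen⟩ := open1 hT hA D t ht _ (hop (1/2) ⟨by norm_num, by norm_num⟩)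
  obtain ⟨dz, tz, -, -, -, -, hlip, -, -⟩ := curve_facts hT hA D
  set B := (A + 1) * (2 * A ^ 2 + 1) with hB
  have hB0 : 0 < B := by positivity
  set P := q * phi d with hP
  have hP0 : 0 < P := mul_pos hq0 hphid
  set C' := 4 * A ^ 2 * (2 * A ^ 2 + 1) with hC'
  have hC'0 : 0 < C' := by positivity
  have hCst : Cst A = C' + A ^ 2 + 1 := rfl
  set C := Cst A with hC
  have hC0 : 0 < C := by rw [hCst]; positivity
  set K := 2 * (A * (2 * A ^ 2 + 1) ^ 2) with hK
  have hev := (ev_small 1 t ht0).and ((ev_small (2 * A ^ 2) (δ0 / 8) (by linarith)).and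
    ((ev_small 1 r hr).and ((ev_small B r hr).and ((ev_small (A + 1 + B) m hm).and
    ((ev_small C' 1 one_pos).and ((ev_small (P * C * C' + K) P hP0).and self_mem_nhdsWithin))))))
  obtain ⟨h, hht, hhη, hhr, hhB, hhm, hhC, hhP, hh0⟩ := hev.exists
  rw [one_mul] at hht hhr
  replace hh0 : 0 < h := hh0
  set s := t - h with hsdef
  have hs : s ∈ Icc (0:ℝ) T := ⟨by linarith, by linarith [ht.2]⟩
  have hst : |s - t| = h := by
    rw [hsdef, show t - h - t = -h by ring, abs_neg, abs_of_pos hh0]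
  obtain ⟨t1, l1⟩ := hb1 h hh0.le hht.le
  obtain ⟨t2, l2⟩ := hb2 h hh0.le hht.le
  set a := α - h * c1 with ha
  set b := β - h * c2 with hb
  have haα : |a - α| < δ0 / 8 := by
    rw [ha, show α - h * c1 - α = -(h * c1) by ring, abs_neg, abs_mul, abs_of_pos hh0]
    linarith [mul_le_mul_of_nonneg_left hc1 hh0.le]
  have hbβ : |b - β| < δ0 / 8 := by
    rw [hb, show β - h * c2 - β = -(h * c2) by ring, abs_neg, abs_mul, abs_of_pos hh0]
    linarith [mul_le_mul_of_nonneg_left hc2 hh0.le]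
  have hab : d - 4 * A ^ 2 * h ≤ |a - b| := by
    have e1 : α - β = (a - b) + h * c1 - h * c2 := by rw [ha, hb]; ring
    have e2 : |h * c1| ≤ 2 * A ^ 2 * h := by
      rw [abs_mul, abs_of_pos hh0]
      linarith [mul_le_mul_of_nonneg_left hc1 hh0.le]
    have e3 : |h * c2| ≤ 2 * A ^ 2 * h := by
      rw [abs_mul, abs_of_pos hh0]
      linarith [mul_le_mul_of_nonneg_left hc2 hh0.le]
    have e4 : |α - β| ≤ |a - b| + |h * c1| + |h * c2| := by
      rw [e1]
      exact (abs_sub _ _).trans (by linarith [abs_add_le (a - b) (h * c1)])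
    linarith
  have hwdiff : ∀ l ∈ Icc (0:ℝ) 1, ‖(D.z a s + l • (D.z b s - D.z a s)) -
      (D.z α t + l • (D.z β t - D.z α t))‖ ≤ B * h := by
    intro l hl
    have e1 : (D.z a s + l • (D.z b s - D.z a s)) - (D.z α t + l • (D.z β t - D.z α t)) =
      (1 - l) • (D.z a s - D.z α t) + l • (D.z b s - D.z β t) := by module
    rw [e1]
    refine (norm_add_le _ _).trans ?_
    rw [norm_smul, norm_smul, Real.norm_eq_abs, Real.norm_eq_abs, abs_of_nonneg hl.1,
      abs_of_nonneg (by linarith [hl.2])]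
    nlinarith [mul_le_mul_of_nonneg_left l1 (show 0 ≤ 1 - l by linarith [hl.2]),
      mul_le_mul_of_nonneg_left l2 hl.1]
  have hmid : D.z a s + (1/2 : ℝ) • (D.z b s - D.z a s) ∈ D.Ω1 s := by
    refine hopen s hs (by rw [hst]; exact hhr) _ ?_
    rw [dist_eq_norm]
    exact (hwdiff (1/2) ⟨by norm_num, by norm_num⟩).trans_lt hhB
  obtain ⟨a', b', μ, hμ, ha', hb', hsum, hlen, hseg⟩ := geo hT hA D s hs a b (δ0 / 4)
    (by rw [← hδ0]; linarith) hmid (by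
      intro e l hl hel
      have e1 : ‖D.z e t - (D.z α t + l • (D.z β t - D.z α t))‖ < m := by
        have e2 := hlip s hs t ht e e
        rw [sub_self, abs_zero, zero_add, hst] at e2
        have e3 := hwdiff l hl
        rw [← hel] at e3
        have e4 : D.z e t - (D.z α t + l • (D.z β t - D.z α t)) =
          (D.z e s - (D.z α t + l • (D.z β t - D.z α t))) - (D.z e s - D.z e t) := by abel
        rw [e4]
        refine (norm_sub_le _ _).trans_lt ?_
        nlinarith
      rcases hhit e l hl e1 with ⟨f1, f2⟩ | ⟨f1, f2⟩
      · left
        refine ⟨?_, f2⟩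
        have := abs_sub_le e α a
        rw [abs_sub_comm α a] at this
        linarith
      · right
        refine ⟨?_, f2⟩
        have := abs_sub_le e β b
        rw [abs_sub_comm β b] at this
        linarith)
  have hd' : |a - b| - (|a' - a| + |b' - b|) ≤ |a' - b'| := by
    have e1 := abs_sub_le a a' b
    have e2 := abs_sub_le a' b' b
    rw [abs_sub_comm a a'] at e1
    linarith
  set ls := ‖D.z a s - D.z b s‖ with hls
  have hls0 : 0 ≤ ls := norm_nonneg _
  refine ⟨h, hh0, hht.le, a', b', ?_, hseg, ?_⟩
  · intro heq
    rw [heq, sub_self, abs_zero] at hd'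
    rw [heq] at ha'
    linarith
  · intro q' hqq' hq'
    rw [hlen]
    have hq'0 : 0 < q' := lt_of_lt_of_le (by positivity) hqq'
    -- the length estimate
    have hlsb : ls ≤ P * (1 + A ^ 2 * h) + K * h ^ 2 := by
      have e1 : D.z a s - D.z b s = (D.z α t - D.z β t) - h • (D.u1 (D.z α t) t - D.u1 (D.z β t) t) +
        (D.z a s - D.z α t + h • D.u1 (D.z α t) t) - (D.z b s - D.z β t + h • D.u1 (D.z β t) t) := by
        module
      have e2 := u_lip hT hA D t ht _ _ hadm
      have e3 : ‖h • (D.u1 (D.z α t) t - D.u1 (D.z β t) t)‖ ≤ h * (A ^ 2 * ‖D.z α t - D.z β t‖) := by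
        rw [norm_smul, Real.norm_eq_abs, abs_of_pos hh0]
        exact mul_le_mul_of_nonneg_left e2 hh0.le
      rw [hls, e1]
      refine (norm_sub_le _ _).trans ?_
      have e4 := norm_add_le ((D.z α t - D.z β t) - h • (D.u1 (D.z α t) t - D.u1 (D.z β t) t))
        (D.z a s - D.z α t + h • D.u1 (D.z α t) t)
      have e5 := norm_sub_le (D.z α t - D.z β t) (h • (D.u1 (D.z α t) t - D.u1 (D.z β t) t))
      have e6 : h * (A ^ 2 * ‖D.z α t - D.z β t‖) ≤ h * (A ^ 2 * P) := by gcongr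
      rw [hK]
      linarith
    have hφs : phi d * (1 - C' * h) ≤ phi |a - b| := by
      have e1 := phi_lip hd0.le (abs_nonneg (a - b)) (c := 4 * A ^ 2 * h) (by positivity) hab
      have e2 : 4 * A ^ 2 * h * 1 ≤ 4 * A ^ 2 * h * (phi d * (2 * A ^ 2 + 1)) :=
        mul_le_mul_of_nonneg_left hphi0 (by positivity)
      rw [hC']
      nlinarith
    have hkey : ls ≤ q' * phi |a - b| := by
      have e1 : q * (1 + C * h) * (phi d * (1 - C' * h)) ≤ q' * phi |a - b| :=
        mul_le_mul hqq' hφs (mul_nonneg hphid.le (by linarith)) hq'0.le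
      have e2 : q * (1 + C * h) * (phi d * (1 - C' * h)) = P * ((1 + C * h) * (1 - C' * h)) := by
        rw [hP]; ring
      have e3 : P * (1 + A ^ 2 * h) + K * h ^ 2 ≤ P * ((1 + C * h) * (1 - C' * h)) := by
        have e4 : P * ((1 + C * h) * (1 - C' * h)) - (P * (1 + A ^ 2 * h) + K * h ^ 2) =
          h * (P * (C - C' - A ^ 2) - (P * C * C' + K) * h) := by ring
        have e5 : C - C' - A ^ 2 = 1 := by rw [hCst]; ring
        rw [e5, mul_one] at e4
        have e6 : 0 ≤ h * (P - (P * C * C' + K) * h) := mul_nonneg hh0.le (by linarith)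
        linarith
      linarith
    have hφ' : phi |a - b| - 2 * A * (μ * ls) ≤ phi |a' - b'| :=
      phi_lip (abs_nonneg _) (abs_nonneg _) (by positivity) (by linarith)
    have e1 : q' * (phi |a - b| - 2 * A * (μ * ls)) ≤ q' * phi |a' - b'| :=
      mul_le_mul_of_nonneg_left hφ' hq'0.le
    have e2 : q' * (2 * A) ≤ 1 := by
      rwa [le_div_iff₀ (by positivity)] at hq'
    have e3 : q' * (2 * A) * (μ * ls) ≤ 1 * (μ * ls) := mul_le_mul_of_nonneg_right e2 (by positivity)
    nlinarith

end


section
variable {ρ1 ρ2 σ grav T A : ℝ}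

/-- admissible pairs -/
def Adm (D : TwoFluid ρ1 ρ2 σ grav T A) (t α β : ℝ) : Prop :=
  ∀ l ∈ Icc (0:ℝ) 1, D.z α t + l • (D.z β t - D.z α t) ∉ D.Ω2 t

lemma adm_iff (D : TwoFluid ρ1 ρ2 σ grav T A) (t : ℝ) (ht : t ∈ Icc (0:ℝ) T) (α β : ℝ) :
    Adm D t α β ↔ segment ℝ (D.z α t) (D.z β t) ⊆ closure (D.Ω1 t) := by
  rw [segment_eq_image', image_subset_iff]
  exact forall₂_congr fun l _ => not_mem_iff D t ht _

lemma om2_shift (D : TwoFluid ρ1 ρ2 σ grav T A) (t : ℝ) (ht : t ∈ Icc (0:ℝ) T) (n : ℤ) (x : E2) :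
    x + (n:ℝ) • transl ∈ D.Ω2 t ↔ x ∈ D.Ω2 t := by
  have h1 : ∀ y, y + transl ∈ D.Ω2 t ↔ y ∈ D.Ω2 t := by
    intro y
    constructor
    · intro h
      rw [← D.hper_Ω2 t ht] at h
      obtain ⟨w, hw, e⟩ := h
      rwa [← add_right_cancel (b := transl) e]
    · intro h
      rw [← D.hper_Ω2 t ht]
      exact ⟨y, h, rfl⟩
  induction n using Int.induction_on with
  | zero => simp
  | succ n ih =>
    push_cast at *
    rw [add_smul, one_smul, ← add_assoc, h1]
    exact ih
  | pred n ih =>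
    push_cast at *
    refine Iff.trans ?_ ih
    rw [← h1, sub_smul, one_smul, show x + (-(n:ℝ) • transl - transl) + transl = x + -(n:ℝ) • transl by abel]

lemma adm_shift (D : TwoFluid ρ1 ρ2 σ grav T A) (t : ℝ) (ht : t ∈ Icc (0:ℝ) T) (n : ℤ) (α β : ℝ)
    (h : Adm D t α β) : Adm D t (α + n * (2 * Real.pi)) (β + n * (2 * Real.pi)) := by
  intro l hl
  have := h l hl
  rw [per_int D t ht, per_int D t ht, add_sub_add_right_eq_sub, add_right_comm, om2_shift D t ht]
  exact this

lemma closedG (hT : 0 < T) (hA : 1 ≤ A) (D : TwoFluid ρ1 ρ2 σ grav T A) :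
    IsClosed {p : E2 × ℝ | p.2 ∈ Icc (0:ℝ) T ∧ p.1 ∉ D.Ω2 p.2} := by
  rw [← isOpen_compl_iff, Metric.isOpen_iff]
  rintro ⟨x, s⟩ hp
  by_cases hs : s ∈ Icc (0:ℝ) T
  · have hx : x ∈ D.Ω2 s := by
      by_contra hx
      exact hp ⟨hs, hx⟩
    obtain ⟨r, hr, h⟩ := open2 hT hA D s hs x hx
    refine ⟨r, hr, ?_⟩
    rintro ⟨y, s'⟩ hy ⟨h1, h2⟩
    rw [Metric.mem_ball, Prod.dist_eq, max_lt_iff] at hy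
    exact h2 (h s' h1 hy.2 y hy.1)
  · have : IsOpen ({p : E2 × ℝ | p.2 ∈ Icc (0:ℝ) T}ᶜ) :=
      (isClosed_Icc.preimage continuous_snd).isOpen_compl
    obtain ⟨r, hr, h⟩ := Metric.isOpen_iff.1 this (x, s) hs
    exact ⟨r, hr, fun y hy hc => h hy hc.1⟩

lemma z_jcont (hT : 0 < T) (hA : 1 ≤ A) (D : TwoFluid ρ1 ρ2 σ grav T A) :
    ContinuousOn (fun p : ℝ × ℝ => D.z p.1 p.2) (univ ×ˢ Icc (0:ℝ) T) := by
  have h := D.hz_smooth.continuousOn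
  have h2 : ContinuousOn (fun p : ℝ × ℝ => p.1 • xvec) (univ ×ˢ Icc (0:ℝ) T) := by fun_prop
  refine (h.add h2).congr fun p _ => ?_
  change _ = D.z p.1 p.2 - p.1 • xvec + p.1 • xvec
  rw [sub_add_cancel]

/-- the threshold -/
def qf (A t : ℝ) : ℝ := 1 / (4 * A) * Real.exp (-(Cst A * t))

lemma Cst_nonneg (A : ℝ) : 0 ≤ Cst A := by unfold Cst; positivity

lemma qf_pos (hA : 1 ≤ A) (t : ℝ) : 0 < qf A t := by
  unfold qf
  have : 0 < A := by linarith
  positivity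

lemma qf_anti (hA : 1 ≤ A) {s t : ℝ} (h : s ≤ t) : qf A t ≤ qf A s := by
  unfold qf
  have : 0 < A := by linarith
  have := Cst_nonneg A
  gcongr

lemma qf_le (hA : 1 ≤ A) {t : ℝ} (h : 0 ≤ t) : qf A t ≤ 1 / (4 * A) := by
  refine (qf_anti hA h).trans ?_
  simp [qf]

lemma qf_step (hA : 1 ≤ A) (t h : ℝ) : qf A t * (1 + Cst A * h) ≤ qf A (t - h) := by
  have e : qf A (t - h) = qf A t * Real.exp (Cst A * h) := by
    unfold qf
    rw [mul_assoc, ← Real.exp_add]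
    ring_nf
  rw [e]
  have := Real.add_one_le_exp (Cst A * h)
  have := qf_pos hA t
  gcongr
  linarith

/-- bad pairs -/
def Bad (D : TwoFluid ρ1 ρ2 σ grav T A) (t α β : ℝ) : Prop :=
  α ≠ β ∧ Adm D t α β ∧ ‖D.z α t - D.z β t‖ ≤ qf A t * phi |α - β|

/-- compact box -/
def Box (T A : ℝ) : Set (ℝ × ℝ × ℝ) :=
  (Icc (0:ℝ) T ×ˢ Icc (0:ℝ) (2 * Real.pi) ×ˢ Icc (-(2 * A + 1)) (2 * Real.pi + (2 * A + 1))) ∩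
    {p | (2 * A ^ 2)⁻¹ ≤ |p.2.1 - p.2.2|}

/-- compact bad set -/
def KK (D : TwoFluid ρ1 ρ2 σ grav T A) : Set (ℝ × ℝ × ℝ) :=
  {p | p ∈ Box T A ∧ Adm D p.1 p.2.1 p.2.2 ∧
    ‖D.z p.2.1 p.1 - D.z p.2.2 p.1‖ ≤ qf A p.1 * phi |p.2.1 - p.2.2|}

lemma box_compact : IsCompact (Box T A) := by
  refine (isCompact_Icc.prod (isCompact_Icc.prod isCompact_Icc)).inter_right ?_
  exact isClosed_le continuous_const (by fun_prop)

lemma za_cont (hT : 0 < T) (hA : 1 ≤ A) (D : TwoFluid ρ1 ρ2 σ grav T A) :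
    ContinuousOn (fun p : ℝ × ℝ × ℝ => D.z p.2.1 p.1) (Box T A) := by
  refine (z_jcont hT hA D).comp (f := fun p : ℝ × ℝ × ℝ => (p.2.1, p.1)) (by fun_prop) ?_
  exact fun p hp => ⟨mem_univ _, hp.1.1⟩

lemma zb_cont (hT : 0 < T) (hA : 1 ≤ A) (D : TwoFluid ρ1 ρ2 σ grav T A) :
    ContinuousOn (fun p : ℝ × ℝ × ℝ => D.z p.2.2 p.1) (Box T A) := by
  refine (z_jcont hT hA D).comp (f := fun p : ℝ × ℝ × ℝ => (p.2.2, p.1)) (by fun_prop) ?_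
  exact fun p hp => ⟨mem_univ _, hp.1.1⟩

lemma phi_cont : Continuous (fun p : ℝ × ℝ × ℝ => phi |p.2.1 - p.2.2|) := by
  unfold phi
  refine Continuous.div (by fun_prop) (by fun_prop) ?_
  intro p
  positivity

lemma qf_cont : Continuous (fun p : ℝ × ℝ × ℝ => qf A p.1) := by
  unfold qf
  fun_prop

lemma KK_compact (hT : 0 < T) (hA : 1 ≤ A) (D : TwoFluid ρ1 ρ2 σ grav T A) : IsCompact (KK D) := by
  have hB := box_compact (T := T) (A := A)
  have ha := za_cont hT hA D
  have hb := zb_cont hT hA D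
  have h1 : IsClosed {p ∈ Box T A | ‖D.z p.2.1 p.1 - D.z p.2.2 p.1‖ ≤
      qf A p.1 * phi |p.2.1 - p.2.2|} :=
    hB.isClosed.isClosed_le (ha.sub hb).norm (qf_cont.mul phi_cont).continuousOn
  have h2 : ∀ l : Icc (0:ℝ) 1, IsClosed (Box T A ∩
      (fun p : ℝ × ℝ × ℝ => (D.z p.2.1 p.1 + (l:ℝ) • (D.z p.2.2 p.1 - D.z p.2.1 p.1), p.1)) ⁻¹'
        {p : E2 × ℝ | p.2 ∈ Icc (0:ℝ) T ∧ p.1 ∉ D.Ω2 p.2}) := by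
    intro l
    refine ContinuousOn.preimage_isClosed_of_isClosed ?_ hB.isClosed (closedG hT hA D)
    exact (ha.add ((hb.sub ha).const_smul (l:ℝ))).prodMk continuous_fst.continuousOn
  have h3 := h1.inter (isClosed_iInter h2)
  refine hB.of_isClosed_subset ?_ (fun p hp => hp.1)
  convert h3 using 1
  ext p
  simp only [KK, mem_ofPred_eq, mem_inter_iff, mem_iInter, mem_preimage]
  constructor
  · rintro ⟨e1, e2, e3⟩
    exact ⟨⟨e1, e3⟩, fun l => ⟨e1, e1.1.1, e2 l l.2⟩⟩
  · rintro ⟨⟨e1, e3⟩, e2⟩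
    exact ⟨e1, fun l hl => (e2 ⟨l, hl⟩).2.2, e3⟩

lemma bad_KK (hT : 0 < T) (hA : 1 ≤ A) (D : TwoFluid ρ1 ρ2 σ grav T A) (t : ℝ)
    (ht : t ∈ Icc (0:ℝ) T) (α β : ℝ) (h : Bad D t α β) : ∃ n : ℤ,
    (t, α + n * (2 * Real.pi), β + n * (2 * Real.pi)) ∈ KK D := by
  obtain ⟨hne, hadm, hl⟩ := h
  have hA0 : 0 < A := by linarith
  have hd : 0 < |α - β| := abs_pos.2 (sub_ne_zero.2 hne)
  obtain ⟨n, hn⟩ := shift_ex α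
  have hq := qf_le hA ht.1
  have hq0 := qf_pos hA t
  have hsub : ∀ c : ℝ, α + c - (β + c) = α - β := fun c => by ring
  have hq4 : 1 / (4 * A) ≤ 1 := by
    rw [div_le_one (by positivity)]; linarith
  refine ⟨n, ⟨⟨⟨ht, hn, ?_⟩, ?_⟩, adm_shift D t ht n α β hadm, ?_⟩⟩
  · have h1 := chord_far hT hA D t ht α β
    have h2 := phi_lt_one hd.le
    have h3 := phi_pos hd
    have h4 : |α - β| ≤ 2 * A + 1 := by nlinarith
    rw [abs_le] at h4
    obtain ⟨hn1, hn2⟩ := hn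
    constructor
    · change _ ≤ β + n * (2 * Real.pi)
      linarith
    · change β + n * (2 * Real.pi) ≤ _
      linarith
  · change _ ≤ |α + n * (2 * Real.pi) - (β + n * (2 * Real.pi))|
    rw [hsub]
    by_contra hc
    push Not at hc
    have h1 := chord_loc hT hA D t ht α β hc.le
    have h2 := phi_le hd.le
    have h3 : qf A t * phi |α - β| ≤ 1 / (4 * A) * |α - β| :=
      mul_le_mul hq h2 (phi_pos hd).le (by positivity)
    have h4 : |α - β| / (2 * A) = 2 * (1 / (4 * A) * |α - β|) := by
      field_simp; norm_num
    have h5 : 0 < 1 / (4 * A) * |α - β| := by positivity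
    linarith
  · change ‖D.z (α + n * (2 * Real.pi)) t - D.z (β + n * (2 * Real.pi)) t‖ ≤
      qf A t * phi |α + n * (2 * Real.pi) - (β + n * (2 * Real.pi))|
    rw [hsub, per_int D t ht, per_int D t ht, add_sub_add_right_eq_sub]
    exact hl

/-- the ratio -/
def RR (D : TwoFluid ρ1 ρ2 σ grav T A) (p : ℝ × ℝ × ℝ) : ℝ :=
  ‖D.z p.2.1 p.1 - D.z p.2.2 p.1‖ / phi |p.2.1 - p.2.2|

lemma RR_def (D : TwoFluid ρ1 ρ2 σ grav T A) (t a b : ℝ) :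
    RR D (t, a, b) = ‖D.z a t - D.z b t‖ / phi |a - b| := rfl

set_option maxHeartbeats 1000000 in
lemma no_bad (hT : 0 < T) (hA : 1 ≤ A) (D : TwoFluid ρ1 ρ2 σ grav T A) (t : ℝ)
    (ht : t ∈ Icc (0:ℝ) T) (α β : ℝ) : ¬ Bad D t α β := by
  intro hbad
  have hA0 : 0 < A := by linarith
  have hKc := KK_compact hT hA D
  have hKne : (KK D).Nonempty := by
    obtain ⟨n, hn⟩ := bad_KK hT hA D t ht α β hbad
    exact ⟨_, hn⟩
  clear hbad ht
  obtain ⟨⟨τ, a1, b1⟩, hp1, hmin⟩ := hKc.exists_isMinOn hKne continuous_fst.continuousOn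
  have hτ : τ ∈ Icc (0:ℝ) T := hp1.1.1.1
  have hmin' : ∀ s ∈ Icc (0:ℝ) T, ∀ a b, Bad D s a b → τ ≤ s := by
    intro s hs a b hb
    obtain ⟨n, hn⟩ := bad_KK hT hA D s hs a b hb
    exact hmin hn
  have hpd : ∀ p ∈ KK D, 0 < |p.2.1 - p.2.2| := fun p hp =>
    lt_of_lt_of_le (by positivity) hp.1.2
  have hSc : IsCompact (KK D ∩ {p | p.1 = τ}) :=
    hKc.inter_right (isClosed_eq continuous_fst continuous_const)
  have hRc : ContinuousOn (RR D) (KK D ∩ {p | p.1 = τ}) := by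
    unfold RR
    refine ContinuousOn.div ?_ phi_cont.continuousOn ?_
    · exact ((za_cont hT hA D).sub (zb_cont hT hA D)).norm.mono fun p hp => hp.1.1
    · intro p hp
      exact (phi_pos (hpd p hp.1)).ne'
  obtain ⟨⟨τ', a, b⟩, ⟨hpK, hτ'⟩, hRmin⟩ := hSc.exists_isMinOn ⟨_, hp1, rfl⟩ hRc
  obtain rfl : τ' = τ := hτ'
  have hRmin2 : ∀ c d, (τ', c, d) ∈ KK D → ‖D.z a τ' - D.z b τ'‖ / phi |a - b| ≤
      ‖D.z c τ' - D.z d τ'‖ / phi |c - d| := by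
    intro c d hcd
    have hm : (τ', c, d) ∈ KK D ∩ {p | p.1 = τ'} := mem_inter hcd rfl
    have hq := isMinOn_iff.1 hRmin (τ', c, d) hm
    rw [RR_def, RR_def] at hq
    exact hq
  have hab : 0 < |a - b| := hpd _ hpK
  have hne : a ≠ b := fun h => by rw [h, sub_self, abs_zero] at hab; exact lt_irrefl _ hab
  have hphi := phi_pos hab
  have hadm : Adm D τ' a b := hpK.2.1
  have hle : ‖D.z a τ' - D.z b τ'‖ ≤ qf A τ' * phi |a - b| := hpK.2.2
  set R := ‖D.z a τ' - D.z b τ'‖ / phi |a - b| with hR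
  have hRl : R * phi |a - b| = ‖D.z a τ' - D.z b τ'‖ := div_mul_cancel₀ _ hphi.ne'
  have hRq : R ≤ qf A τ' := (div_le_iff₀ hphi).2 hle
  have hl0 : 0 < ‖D.z a τ' - D.z b τ'‖ :=
    norm_pos_iff.2 (sub_ne_zero.2 fun h => hne (curve_inj hT hA D τ' hτ h))
  have hR0 : 0 < R := div_pos hl0 hphi
  have hall : ∀ c d, c ≠ d → Adm D τ' c d → R * phi |c - d| ≤ ‖D.z c τ' - D.z d τ'‖ := by
    intro c d hcd hcda
    have hp := phi_pos (abs_pos.2 (sub_ne_zero.2 hcd))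
    by_cases hb : ‖D.z c τ' - D.z d τ'‖ ≤ qf A τ' * phi |c - d|
    · obtain ⟨n, hn⟩ := bad_KK hT hA D τ' hτ c d ⟨hcd, hcda, hb⟩
      have h1 := hRmin2 _ _ hn
      rw [per_int D τ' hτ, per_int D τ' hτ, add_sub_add_right_eq_sub, add_sub_add_right_eq_sub,
        le_div_iff₀ hp] at h1
      exact h1
    · push Not at hb
      exact (mul_le_mul_of_nonneg_right hRq hp.le).trans hb.le
  have hop : ∀ l ∈ Ioo (0:ℝ) 1, D.z a τ' + l • (D.z b τ' - D.z a τ') ∈ D.Ω1 τ' := by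
    intro l hl
    by_contra hc
    have h2 := hadm l ⟨hl.1.le, hl.2.le⟩
    have hu : D.z a τ' + l • (D.z b τ' - D.z a τ') ∈ D.Ω1 τ' ∪ D.Ω2 τ' ∪ range (fun α => D.z α τ') := by
      rw [D.hUnion τ' hτ]; trivial
    rcases hu with (h | h) | ⟨c, hc'⟩
    · exact hc h
    · exact h2 h
    simp only at hc'
    have n1 : ‖D.z a τ' - D.z c τ'‖ = l * ‖D.z a τ' - D.z b τ'‖ := by
      rw [hc', show D.z a τ' - (D.z a τ' + l • (D.z b τ' - D.z a τ')) = l • (D.z a τ' - D.z b τ') by module,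
        norm_smul, Real.norm_eq_abs, abs_of_pos hl.1]
    have n2 : ‖D.z c τ' - D.z b τ'‖ = (1 - l) * ‖D.z a τ' - D.z b τ'‖ := by
      rw [hc', show (D.z a τ' + l • (D.z b τ' - D.z a τ')) - D.z b τ' = (1 - l) • (D.z a τ' - D.z b τ') by module,
        norm_smul, Real.norm_eq_abs, abs_of_pos (by linarith [hl.2])]
    have hac : a ≠ c := by
      intro h
      rw [← h, sub_self, norm_zero] at n1
      have := mul_pos hl.1 hl0
      linarith
    have hcb : c ≠ b := by
      intro h
      rw [← h, sub_self, norm_zero] at n2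
      rw [← h] at hl0
      have := mul_pos (sub_pos.2 hl.2) hl0
      linarith
    have A1 : Adm D τ' a c := by
      intro m hm
      have := hadm (m * l) ⟨mul_nonneg hm.1 hl.1.le, mul_le_one₀ hm.2 hl.1.le hl.2.le⟩
      rw [hc']
      convert this using 2
      module
    have A2 : Adm D τ' c b := by
      intro m hm
      have := hadm (l + m * (1 - l)) ⟨by nlinarith [hm.1, hl.1, hl.2], by nlinarith [hm.2, hl.1, hl.2]⟩
      rw [hc']
      convert this using 2
      module
    have B1 := hall a c hac A1
    have B2 := hall c b hcb A2
    have B3 := phi_sub (abs_pos.2 (sub_ne_zero.2 hac)) (abs_pos.2 (sub_ne_zero.2 hcb)) hab.le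
      (abs_sub_le a c b)
    have B4 := mul_lt_mul_of_pos_left B3 hR0
    rw [n1] at B1
    rw [n2] at B2
    rw [mul_add] at B4
    linarith
  have hτ0 : 0 < τ' := by
    refine lt_of_le_of_ne hτ.1 ?_
    intro h0
    rw [← h0] at hle
    have h1 := D.hchord0 a b
    rw [chordArcT, if_neg hne, le_div_iff₀ hab] at h1
    have h2 := phi_le hab.le
    have h3 := qf_le hA (le_refl (0:ℝ))
    have h4 : qf A 0 * phi |a - b| ≤ 1 / (4 * A) * |a - b| :=
      mul_le_mul h3 h2 hphi.le (by positivity)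
    have h5 : A⁻¹ * |a - b| = 4 * (1 / (4 * A) * |a - b|) := by
      field_simp
    have h6 : 0 < 1 / (4 * A) * |a - b| := by positivity
    linarith
  obtain ⟨h, hh0, hht, a', b', hne', hseg', hfin⟩ := step hT hA D τ' hτ hτ0 a b hne hop
    ((adm_iff D τ' hτ a b).1 hadm) (qf A τ') (qf_pos hA _) (qf_le hA hτ.1) hle
  have hs : τ' - h ∈ Icc (0:ℝ) T := ⟨by linarith, by linarith [hτ.2]⟩
  have hq2 : qf A (τ' - h) ≤ 1 / (2 * A) := by
    refine (qf_le hA hs.1).trans ?_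
    apply one_div_le_one_div_of_le <;> linarith
  have := hmin' (τ' - h) hs a' b' ⟨hne', (adm_iff D _ hs a' b').2 hseg',
    hfin _ (qf_step hA τ' h) hq2⟩
  linarith

end
/-- **A splash can only occur through the second fluid (Lemma 2.4).**  For every `δ > 0` there is
`ε₃ > 0`, depending only on `A`, `T`, `δ` and the constants `σ`, `g`, `ρ¹`, `ρ²`, such that if
`t ∈ [0,T]`, `|α − β| ≥ δ`, and the segment joining `z(α,t)` and `z(β,t)` is contained in the
closure of `Ω¹(t)`, then `|z(α,t) − z(β,t)| ≥ ε₃`. -/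
theorem splash_only_through_second_fluid (ρ1 ρ2 σ grav T A : ℝ)
    (hρ1 : 0 < ρ1) (hρ2 : 0 < ρ2) (hσ : 0 ≤ σ) (hgrav : 0 ≤ grav) (hT : 0 < T) (hA : 1 ≤ A)
    (δ : ℝ) (hδ : 0 < δ) :
    ∃ ε3 : ℝ, 0 < ε3 ∧
      ∀ D : TwoFluid ρ1 ρ2 σ grav T A, ∀ t ∈ Icc (0:ℝ) T, ∀ α β : ℝ,
        δ ≤ |α - β| →
        segment ℝ (D.z α t) (D.z β t) ⊆ closure (D.Ω1 t) →
        ε3 ≤ ‖D.z α t - D.z β t‖ := by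
  refine ⟨qf A T * phi δ, mul_pos (qf_pos hA T) (phi_pos hδ), ?_⟩
  intro D t ht α β hd hseg
  have hne : α ≠ β := by
    intro h
    rw [h, sub_self, abs_zero] at hd
    linarith
  have h1 := no_bad hT hA D t ht α β
  have h2 : qf A t * phi |α - β| < ‖D.z α t - D.z β t‖ := by
    by_contra hc
    push Not at hc
    exact h1 ⟨hne, (adm_iff D t ht α β).2 hseg, hc⟩
  refine le_trans ?_ h2.le
  exact mul_le_mul (qf_anti hA ht.2) (phi_mono hδ.le hd) (phi_pos hδ).le (qf_pos hA t).le
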